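/- Let n > 2 and let Γ ⊂ ℂⁿ be an irreducible algebraic curve having at least one singular point. Then there exists an algebraic curve Λ ⊂ ℂⁿ such that Λ and Γ are topologically equivalent — i.e., there is a homeomorphism Φ : ℂⁿ → ℂⁿ with Φ(Λ) = Γ — but Λ and Γ are not bi-Lipschitz equivalent. -/

import Mathlib

open Set Metric

noncomputable section

/-- An algebraic set in ℂᵏ: the common zero set of a finite family of polynomials. -/
def IsAlgebraicSet {k : ℕ} (X : Set (EuclideanSpace ℂ (Fin k))) : Prop :=
  ∃ S : Finset (MvPolynomial (Fin k) ℂ),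
    X = {x | ∀ p ∈ S, MvPolynomial.eval (fun i => x i) p = 0}

/-- An irreducible algebraic curve: an infinite algebraic set all of whose proper algebraic
subsets are finite. -/
def IsIrreducibleAlgebraicCurve {k : ℕ} (X : Set (EuclideanSpace ℂ (Fin k))) : Prop :=
  IsAlgebraicSet X ∧ X.Infinite ∧ ∀ Y, IsAlgebraicSet Y → Y ⊂ X → Y.Finite

/-- An algebraic curve: a finite union of irreducible algebraic curves. -/
def IsAlgebraicCurve {k : ℕ} (X : Set (EuclideanSpace ℂ (Fin k))) : Prop :=
  ∃ F : Finset (Set (EuclideanSpace ℂ (Fin k))),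
    (∀ C ∈ F, IsIrreducibleAlgebraicCurve C) ∧ X = ⋃ C ∈ F, C

/-- `f` maps `X` bijectively onto `Y` and is bi-Lipschitz (outer metric). -/
def IsBiLipschitzOn {E F : Type*} [NormedAddCommGroup E] [NormedAddCommGroup F]
    (f : E → F) (X : Set E) (Y : Set F) : Prop :=
  Set.BijOn f X Y ∧ ∃ C : ℝ, 1 ≤ C ∧ ∀ x ∈ X, ∀ x' ∈ X,
    C⁻¹ * ‖x - x'‖ ≤ ‖f x - f x'‖ ∧ ‖f x - f x'‖ ≤ C * ‖x - x'‖

/-- `X` and `Y` are bi-Lipschitz equivalent (with respect to the outer Euclidean metric). -/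
def BiLipschitzEquiv {E F : Type*} [NormedAddCommGroup E] [NormedAddCommGroup F]
    (X : Set E) (Y : Set F) : Prop :=
  ∃ f : E → F, IsBiLipschitzOn f X Y

/-- `X` and `Y` are bi-Lipschitz equivalent at infinity. -/
def BiLipschitzEquivAtInfinity {E F : Type*} [NormedAddCommGroup E] [NormedAddCommGroup F]
    (X : Set E) (Y : Set F) : Prop :=
  ∃ (K₁ : Set E) (K₂ : Set F), IsCompact K₁ ∧ IsCompact K₂ ∧
    BiLipschitzEquiv (X \ K₁) (Y \ K₂)

/-- The germs `(X, p)` and `(Y, q)` are bi-Lipschitz equivalent. -/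
def GermBiLipschitzEquiv {E F : Type*} [NormedAddCommGroup E] [NormedAddCommGroup F]
    (X : Set E) (p : E) (Y : Set F) (q : F) : Prop :=
  ∃ (U : Set E) (V : Set F), IsOpen U ∧ IsOpen V ∧ p ∈ U ∧ q ∈ V ∧
    ∃ f : E → F, IsBiLipschitzOn f (X ∩ U) (Y ∩ V) ∧ f p = q

/-- `γ` maps `D` homeomorphically onto `S`. -/
def MapsHomeomorphicallyOnto {E : Type*} [TopologicalSpace E]
    (γ : ℂ → E) (D : Set ℂ) (S : Set E) : Prop :=
  Set.InjOn γ D ∧ γ '' D = S ∧ ContinuousOn γ D ∧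
    ∃ σ : E → ℂ, ContinuousOn σ S ∧ ∀ z ∈ D, σ (γ z) = z

/-- A regular point of a curve `X ⊂ ℂᵏ`: some neighborhood of `p` in `X` is the
homeomorphic image of an injective holomorphic map with nowhere-vanishing derivative. -/
def IsRegularPoint {k : ℕ} (X : Set (EuclideanSpace ℂ (Fin k)))
    (p : EuclideanSpace ℂ (Fin k)) : Prop :=
  ∃ (U : Set (EuclideanSpace ℂ (Fin k))) (D : Set ℂ) (γ : ℂ → EuclideanSpace ℂ (Fin k)),
    IsOpen U ∧ p ∈ U ∧ IsOpen D ∧ DifferentiableOn ℂ γ D ∧ Set.InjOn γ D ∧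
    (∀ z ∈ D, deriv γ z ≠ 0) ∧ MapsHomeomorphicallyOnto γ D (X ∩ U)

/-- The set of singular points of `X`. -/
def SingularSet {k : ℕ} (X : Set (EuclideanSpace ℂ (Fin k))) :
    Set (EuclideanSpace ℂ (Fin k)) :=
  {p ∈ X | ¬ IsRegularPoint X p}

/-- `B` is a (smooth) branch through `q` with tangent vector `v`. -/
def IsBranchAt (B : Set (EuclideanSpace ℂ (Fin 2))) (q v : EuclideanSpace ℂ (Fin 2)) : Prop :=
  ∃ (D : Set ℂ) (γ : ℂ → EuclideanSpace ℂ (Fin 2)) (z₀ : ℂ),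
    IsOpen D ∧ z₀ ∈ D ∧ DifferentiableOn ℂ γ D ∧ Set.InjOn γ D ∧
    (∀ z ∈ D, deriv γ z ≠ 0) ∧ MapsHomeomorphicallyOnto γ D B ∧
    γ z₀ = q ∧ deriv γ z₀ = v

/-- `q` is a node of the plane curve `Y`: near `q`, `Y` is the union of two smooth branches
meeting only at `q` with distinct tangent lines. -/
def IsNode (Y : Set (EuclideanSpace ℂ (Fin 2))) (q : EuclideanSpace ℂ (Fin 2)) : Prop :=
  q ∈ Y ∧ ∃ (U B₁ B₂ : Set (EuclideanSpace ℂ (Fin 2))) (v₁ v₂ : EuclideanSpace ℂ (Fin 2)),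
    IsOpen U ∧ q ∈ U ∧ Y ∩ U = B₁ ∪ B₂ ∧ B₁ ∩ B₂ = {q} ∧
    IsBranchAt B₁ q v₁ ∧ IsBranchAt B₂ q v₂ ∧ ∀ c : ℂ, v₂ ≠ c • v₁

/-- The set of points of `ℂ²` having more than one `π`-preimage in `X`. -/
def MultipleSet {n : ℕ} (π : EuclideanSpace ℂ (Fin n) →ₗ[ℂ] EuclideanSpace ℂ (Fin 2))
    (X : Set (EuclideanSpace ℂ (Fin n))) : Set (EuclideanSpace ℂ (Fin 2)) :=
  {q | ∃ x ∈ X, ∃ y ∈ X, x ≠ y ∧ π x = q ∧ π y = q}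

/-- `π` is a generic plane projection for the algebraic curve `X ⊂ ℂⁿ`. -/
def IsGenericPlaneProjection {n : ℕ}
    (π : EuclideanSpace ℂ (Fin n) →ₗ[ℂ] EuclideanSpace ℂ (Fin 2))
    (X : Set (EuclideanSpace ℂ (Fin n))) : Prop :=
  Function.Surjective π ∧
  (∀ K : Set (EuclideanSpace ℂ (Fin 2)), IsCompact K → IsCompact (X ∩ ⇑π ⁻¹' K)) ∧
  (MultipleSet π X).Finite ∧
  (∀ q ∈ MultipleSet π X, ∃ x y, x ≠ y ∧ {z ∈ X | π z = q} = {x, y} ∧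
    IsRegularPoint X x ∧ IsRegularPoint X y) ∧
  (∀ q ∈ MultipleSet π X, IsNode (⇑π '' X) q) ∧
  (∀ p ∈ X, π p ∉ MultipleSet π X →
    ∃ (U : Set (EuclideanSpace ℂ (Fin n))) (V : Set (EuclideanSpace ℂ (Fin 2))),
      IsOpen U ∧ IsOpen V ∧ p ∈ U ∧ π p ∈ V ∧
      IsBiLipschitzOn (⇑π) (X ∩ U) ((⇑π '' X) ∩ V))

/-- The complex projective plane `ℂP²`. -/
abbrev ProjPlane : Type := Projectivization ℂ (Fin 3 → ℂ)

instance : TopologicalSpace ProjPlane :=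
  inferInstanceAs (TopologicalSpace (Quotient (projectivizationSetoid ℂ (Fin 3 → ℂ))))

/-- The embedding `ℂ² → ℂP²`, `(x, y) ↦ (x : y : 1)`. -/
def toProj (p : EuclideanSpace ℂ (Fin 2)) : ProjPlane :=
  Projectivization.mk ℂ ![p 0, p 1, 1] (fun h => by simpa using congrFun h 2)

/-- The line at infinity in `ℂP²`. -/
def lineAtInfinity : Set ProjPlane := {P | P.rep 2 = 0}

/-- The projective closure of a plane curve `X ⊂ ℂ²`: the topological closure in `ℂP²`. -/
def projClosure (X : Set (EuclideanSpace ℂ (Fin 2))) : Set ProjPlane :=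
  closure (toProj '' X)

/-- The germs `(A, p)` and `(B, q)` are (ambient) topologically equivalent. -/
def GermTopEquiv {T : Type*} [TopologicalSpace T] (A : Set T) (p : T) (B : Set T) (q : T) :
    Prop :=
  ∃ (U V : Set T) (φ ψ : T → T),
    IsOpen U ∧ IsOpen V ∧ p ∈ U ∧ q ∈ V ∧
    ContinuousOn φ U ∧ ContinuousOn ψ V ∧ Set.MapsTo φ U V ∧ Set.MapsTo ψ V U ∧
    (∀ x ∈ U, ψ (φ x) = x) ∧ (∀ y ∈ V, φ (ψ y) = y) ∧
    φ p = q ∧ φ '' (A ∩ U) = B ∩ V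

/-- The `i`-th standard affine chart of `ℂP²`. -/
def chart (i : Fin 3) (P : ProjPlane) : EuclideanSpace ℂ (Fin 2) :=
  (EuclideanSpace.equiv (Fin 2) ℂ).symm fun j => P.rep (i.succAbove j) / P.rep i

/-- A regular point of a curve `C ⊂ ℂP²`: read in a standard affine chart, some neighborhood
of `p` in `C` is the homeomorphic image of an injective holomorphic map with
nowhere-vanishing derivative. -/
def IsRegularPointProj (C : Set ProjPlane) (p : ProjPlane) : Prop :=
  ∃ i : Fin 3, p.rep i ≠ 0 ∧
    ∃ W : Set ProjPlane, IsOpen W ∧ p ∈ W ∧ W ⊆ {P : ProjPlane | P.rep i ≠ 0} ∧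
      ∃ (D : Set ℂ) (γ : ℂ → EuclideanSpace ℂ (Fin 2)),
        IsOpen D ∧ DifferentiableOn ℂ γ D ∧ Set.InjOn γ D ∧ (∀ z ∈ D, deriv γ z ≠ 0) ∧
        MapsHomeomorphicallyOnto γ D (chart i '' (C ∩ W))

/-- The set of singular points of a curve `C ⊂ ℂP²`. -/
def SingularSetProj (C : Set ProjPlane) : Set ProjPlane :=
  {p ∈ C | ¬ IsRegularPointProj C p}

/-- `C` is an irreducible component of the algebraic curve `X`. -/
def IsIrreducibleComponent {k : ℕ} (C X : Set (EuclideanSpace ℂ (Fin k))) : Prop :=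
  IsIrreducibleAlgebraicCurve C ∧ C ⊆ X ∧
    ∀ C', IsIrreducibleAlgebraicCurve C' → C' ⊆ X → C ⊆ C' → C' = C

/-- The degree of an algebraic plane curve: the minimal degree of a nonzero polynomial
vanishing identically on it. -/
def curveDegree (X : Set (EuclideanSpace ℂ (Fin 2))) : ℕ :=
  sInf {d | ∃ P : MvPolynomial (Fin 2) ℂ, P ≠ 0 ∧ P.totalDegree = d ∧
    ∀ x ∈ X, MvPolynomial.eval (fun i => x i) P = 0}

abbrev Eu (n : ℕ) := EuclideanSpace ℂ (Fin n)

def evp {n : ℕ} (p : Eu n) : MvPolynomial (Fin n) ℂ →ₐ[ℂ] ℂ := MvPolynomial.aeval (fun i => p i)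

lemma evp_eq {n : ℕ} (p : Eu n) (f : MvPolynomial (Fin n) ℂ) :
    evp p f = MvPolynomial.eval (fun i => p i) f := by
  simp [evp]

lemma evp_X {n : ℕ} (p : Eu n) (i : Fin n) : evp p (MvPolynomial.X i) = p i := by simp [evp]

/-- vanishing ideal -/
def vI {n : ℕ} (Γ : Set (Eu n)) : Ideal (MvPolynomial (Fin n) ℂ) where
  carrier := {f | ∀ p ∈ Γ, evp p f = 0}
  add_mem' := by
    intro a b ha hb p hp
    simp [ha p hp, hb p hp]
  zero_mem' := by intro p _; simp
  smul_mem' := by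
    intro c x hx p hp
    simp [hx p hp]

lemma mem_vI {n : ℕ} {Γ : Set (Eu n)} {f : MvPolynomial (Fin n) ℂ} :
    f ∈ vI Γ ↔ ∀ p ∈ Γ, evp p f = 0 := Iff.rfl

lemma algSet_inter {n : ℕ} {Γ : Set (Eu n)} (h : IsAlgebraicSet Γ) (f : MvPolynomial (Fin n) ℂ) :
    IsAlgebraicSet (Γ ∩ {p | evp p f = 0}) := by
  classical
  obtain ⟨S, rfl⟩ := h
  refine ⟨insert f S, ?_⟩
  ext p
  simp [evp_eq, and_comm]

lemma finite_zero {n : ℕ} {Γ : Set (Eu n)} (h : IsIrreducibleAlgebraicCurve Γ)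
    {f : MvPolynomial (Fin n) ℂ} (hf : f ∉ vI Γ) : (Γ ∩ {p | evp p f = 0}).Finite := by
  apply h.2.2 _ (algSet_inter h.1 f)
  refine ⟨inter_subset_left, fun hs => hf fun p hp => (hs hp).2⟩

lemma vI_prime {n : ℕ} {Γ : Set (Eu n)} (h : IsIrreducibleAlgebraicCurve Γ) :
    (vI Γ).IsPrime := by
  constructor
  · intro ht
    obtain ⟨p, hp⟩ := h.2.1.nonempty
    have : (1 : MvPolynomial (Fin n) ℂ) ∈ vI Γ := by rw [ht]; trivial
    simpa using this p hp
  · intro f g hfg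
    by_contra hcon
    push Not at hcon
    apply h.2.1
    apply ((finite_zero h hcon.1).union (finite_zero h hcon.2)).subset
    intro p hp
    have := hfg p hp
    rw [map_mul, mul_eq_zero] at this
    rcases this with h1 | h1
    · exact Or.inl ⟨hp, h1⟩
    · exact Or.inr ⟨hp, h1⟩

/-- coordinate ring -/
abbrev CR {n : ℕ} (Γ : Set (Eu n)) := MvPolynomial (Fin n) ℂ ⧸ vI Γ

abbrev mkA {n : ℕ} (Γ : Set (Eu n)) : MvPolynomial (Fin n) ℂ →ₐ[ℂ] CR Γ :=
  Ideal.Quotient.mkₐ ℂ (vI Γ)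

lemma mkA_eq_zero {n : ℕ} {Γ : Set (Eu n)} {f : MvPolynomial (Fin n) ℂ} :
    mkA Γ f = 0 ↔ f ∈ vI Γ := by
  simp [mkA, Ideal.Quotient.eq_zero_iff_mem]

/-- evaluation at a point -/
def evA {n : ℕ} {Γ : Set (Eu n)} (p : Eu n) (hp : p ∈ Γ) : CR Γ →ₐ[ℂ] ℂ :=
  Ideal.Quotient.liftₐ (vI Γ) (evp p) (fun a ha => ha p hp)

lemma evA_mk {n : ℕ} {Γ : Set (Eu n)} (p : Eu n) (hp : p ∈ Γ) (f) :
    evA p hp (mkA Γ f) = evp p f := by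
  rfl

lemma CR_ext {n : ℕ} {Γ : Set (Eu n)} {a : CR Γ} (h : ∀ p (hp : p ∈ Γ), evA p hp a = 0) :
    a = 0 := by
  obtain ⟨f, rfl⟩ := Ideal.Quotient.mkₐ_surjective ℂ (vI Γ) a
  rw [mkA_eq_zero]
  intro p hp
  rw [← evA_mk p hp]; exact h p hp

lemma point_of_hom {n : ℕ} {Γ : Set (Eu n)} (h : IsAlgebraicSet Γ) (φ : CR Γ →ₐ[ℂ] ℂ) :
    ∃ p, ∃ hp : p ∈ Γ, ∀ a, φ a = evA p hp a := by
  let p : Eu n := WithLp.toLp 2 (fun i => φ (mkA Γ (MvPolynomial.X i)))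
  have hφ : ∀ f, φ (mkA Γ f) = evp p f := by
    intro f
    have : φ.comp (mkA Γ) = evp p := by
      apply MvPolynomial.algHom_ext
      intro i
      rw [evp_X]; rfl
    exact DFunLike.congr_fun this f
  have hp : p ∈ Γ := by
    obtain ⟨S, hS⟩ := h
    have h2 : p ∈ {x : Eu n | ∀ p ∈ S, MvPolynomial.eval (fun i => x i) p = 0} := by
      intro f hf
      rw [← evp_eq, ← hφ]
      have : mkA Γ f = 0 := by
        rw [mkA_eq_zero]
        intro q hq
        rw [hS] at hq
        rw [evp_eq]; exact hq f hf
      rw [this, map_zero]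
    rwa [hS]
  refine ⟨p, hp, fun a => ?_⟩
  obtain ⟨f, rfl⟩ := Ideal.Quotient.mkₐ_surjective ℂ (vI Γ) a
  exact (hφ f).trans (evA_mk p hp f).symm

lemma lying_over {R A : Type*} [CommRing R] [CommRing A] [Algebra ℂ R] [Algebra ℂ A]
    (g : R →ₐ[ℂ] A) (hg : g.toRingHom.IsIntegral) (ψ : R →ₐ[ℂ] ℂ)
    (hk : ∀ r, g r = 0 → ψ r = 0) : ∃ φ : A →ₐ[ℂ] ℂ, ∀ r, φ (g r) = ψ r := by
  let : Algebra R A := g.toRingHom.toAlgebra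
  have : Algebra.IsIntegral R A := ⟨hg⟩
  have hpr : (RingHom.ker ψ).IsPrime := RingHom.ker_isPrime ψ
  obtain ⟨Q, -, hQ, hQc⟩ := Ideal.exists_ideal_over_prime_of_isIntegral (S := A)
    (RingHom.ker ψ) ⊥ (by
      intro r hr
      exact hk r (by
        have h0 : (algebraMap R A) r = 0 := by simpa using hr
        exact h0))
  have hmem : ∀ r, g r ∈ Q ↔ ψ r = 0 := by
    intro r
    rw [← RingHom.mem_ker, ← hQc]; rfl
  have hgg : ∀ r : R, g (r - algebraMap ℂ R (ψ r)) ∈ Q := by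
    intro r
    rw [hmem]; simp
  have hbij : Function.Bijective (algebraMap ℂ (A ⧸ Q)) := by
    apply IsAlgClosed.ringHom_bijective_of_isIntegral
    intro a
    obtain ⟨a, rfl⟩ := Ideal.Quotient.mk_surjective a
    obtain ⟨P, hP, hP0⟩ := hg a
    refine ⟨P.map ψ.toRingHom, hP.map _, ?_⟩
    rw [Polynomial.eval₂_map]
    have h1 : (algebraMap ℂ (A ⧸ Q)).comp ψ.toRingHom = (Ideal.Quotient.mk Q).comp g.toRingHom := by
      ext r
      have := Ideal.Quotient.eq_zero_iff_mem.mpr (hgg r)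
      rw [map_sub, map_sub, sub_eq_zero] at this
      simp only [AlgHom.commutes] at this
      exact this.symm
    rw [h1, ← Polynomial.hom_eval₂, hP0, map_zero]
  let e : ℂ ≃ₐ[ℂ] (A ⧸ Q) := AlgEquiv.ofBijective (Algebra.ofId ℂ (A ⧸ Q)) hbij
  refine ⟨(e.symm : (A ⧸ Q) →ₐ[ℂ] ℂ).comp (Ideal.Quotient.mkₐ ℂ Q), fun r => ?_⟩
  have := Ideal.Quotient.eq_zero_iff_mem.mpr (hgg r)
  rw [map_sub, map_sub, sub_eq_zero] at this
  simp only [AlgHom.commutes] at this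
  show e.symm (Ideal.Quotient.mk Q (g r)) = ψ r
  rw [this, AlgEquiv.symm_apply_eq]
  rfl

lemma not_algInd {n : ℕ} {Γ : Set (Eu n)} (h : IsIrreducibleAlgebraicCurve Γ)
    (f : Fin 2 → CR Γ) : ¬ AlgebraicIndependent ℂ f := by
  intro hf
  have := vI_prime h
  have : IsDomain (CR Γ) := Ideal.Quotient.isDomain _
  obtain ⟨s, g, hinj, hint⟩ := exists_integral_inj_algHom_of_fg ℂ (CR Γ)
  have hs : s ≤ 1 := by
    by_contra hs
    push Not at hs
    let i0 : Fin s := ⟨0, by omega⟩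
    let i1 : Fin s := ⟨1, by omega⟩
    have hz : g (MvPolynomial.X i0) ≠ 0 := by
      rw [Ne, map_eq_zero_iff g hinj]; exact MvPolynomial.X_ne_zero _
    obtain ⟨f0, hf0⟩ := Ideal.Quotient.mkₐ_surjective ℂ (vI Γ) (g (MvPolynomial.X i0))
    have hfin := finite_zero h (f := f0) (by rw [← mkA_eq_zero]; rw [← hf0] at hz; exact hz)
    have : ∀ c : ℂ, ∃ p, ∃ hp : p ∈ Γ, evp p f0 = 0 ∧ evA p hp (g (MvPolynomial.X i1)) = c := by
      intro c
      obtain ⟨φ, hφ⟩ := lying_over g hint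
        (MvPolynomial.aeval (fun i => if i = i1 then c else 0)) (by
          intro r hr
          rw [map_eq_zero_iff g hinj] at hr
          simp [hr])
      obtain ⟨p, hp, hpe⟩ := point_of_hom h.1 φ
      refine ⟨p, hp, ?_, ?_⟩
      · rw [← evA_mk p hp, ← hpe]
        erw [hf0]
        rw [hφ]
        simp [i0, i1]
      · rw [← hpe, hφ]; simp
    choose q hq hq0 hq1 using this
    have hqi : Function.Injective q := by
      intro a b hab
      rw [← hq1 a, ← hq1 b]
      congr
    apply Set.infinite_range_of_injective hqi
    apply hfin.subset
    rintro _ ⟨c, rfl⟩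
    exact ⟨hq c, hq0 c⟩
  have : Algebra.IsAlgebraic (Algebra.adjoin ℂ (Set.range fun i => g (MvPolynomial.X i)))
      (CR Γ) := by
    constructor
    intro a
    apply IsIntegral.isAlgebraic
    obtain ⟨P, hP, hP0⟩ := hint a
    have hmem : ∀ r, g r ∈ Algebra.adjoin ℂ (Set.range fun i => g (MvPolynomial.X i)) := by
      intro r
      have : g = MvPolynomial.aeval (fun i => g (MvPolynomial.X i)) := by
        apply MvPolynomial.algHom_ext; intro i; simp
      rw [Algebra.adjoin_range_eq_range_aeval, this]
      simp
    refine ⟨P.map (g.codRestrict _ hmem).toRingHom, hP.map _, ?_⟩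
    rw [Polynomial.eval₂_map]
    exact hP0
  have h1 := Algebra.IsAlgebraic.trdeg_le_cardinalMk ℂ (Set.range fun i => g (MvPolynomial.X i))
  have h2 := hf.lift_cardinalMk_le_trdeg
  have h3 : Cardinal.mk (Set.range fun i => g (MvPolynomial.X i)) ≤ 1 := by
    refine Cardinal.mk_range_le.trans ?_
    simp
    exact_mod_cast hs
  have h4 := h2.trans (Cardinal.lift_le.mpr (h1.trans h3))
  simp at h4

def lf {n : ℕ} (a : Fin n → ℂ) (p : Eu n) : ℂ := ∑ i, a i * p i

lemma lead_exists (Q : MvPolynomial (Fin 2) ℂ) (hQ : Q ≠ 0) :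
    ∃ t : ℂ, (∑ m ∈ Q.support, if m 0 + m 1 = Q.totalDegree then Q.coeff m * (-t) ^ (m 0) else 0) ≠ 0 := by
  classical
  let h : Polynomial ℂ := ∑ m ∈ Q.support,
    if m 0 + m 1 = Q.totalDegree then Polynomial.C (Q.coeff m) * Polynomial.X ^ (m 0) else 0
  have hne : h ≠ 0 := by
    obtain ⟨m, hm, hmd⟩ : ∃ m ∈ Q.support, m 0 + m 1 = Q.totalDegree := by
      have hs : Q.support.Nonempty := MvPolynomial.support_nonempty.mpr hQ
      obtain ⟨m, hm, hmd⟩ := Finset.exists_mem_eq_sup Q.support hs (fun s => s.sum fun _ e => e)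
      refine ⟨m, hm, ?_⟩
      rw [MvPolynomial.totalDegree, hmd, Finsupp.sum_fintype _ _ (by simp)]
      simp
    intro h0
    have : h.coeff (m 0) = Q.coeff m := by
      simp only [h, Polynomial.finset_sum_coeff]
      rw [Finset.sum_eq_single_of_mem m hm]
      · simp [hmd]
      · intro b hb hbm
        split_ifs with hc
        · rw [Polynomial.coeff_C_mul, Polynomial.coeff_X_pow, if_neg, mul_zero]
          intro h00
          apply hbm
          ext i
          fin_cases i
          · exact h00.symm
          · show b 1 = m 1
            omega
        · simp
    rw [h0] at this
    simp at this
    exact (MvPolynomial.mem_support_iff.mp hm) this.symm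
  by_contra hcon
  push Not at hcon
  apply hne
  apply Polynomial.funext
  intro r
  have := hcon (-r)
  simp only [h, Polynomial.eval_finset_sum, Polynomial.eval_zero]
  rw [← this]
  apply Finset.sum_congr rfl
  intro m _
  split_ifs <;> simp

lemma integral_step {F : Type*} [CommRing F] [Algebra ℂ F] (T u v : F)
    (Q : MvPolynomial (Fin 2) ℂ) (hQ : Q ≠ 0)
    (hrel : ∑ m ∈ Q.support, algebraMap ℂ F (Q.coeff m) *
      (T ^ (Q.totalDegree - (m 0 + m 1)) * (u ^ (m 0) * v ^ (m 1))) = 0) :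
    ∃ t : ℂ, ∀ S : Subalgebra ℂ F, T ∈ S → u + t • v ∈ S → IsIntegral S v := by
  classical
  obtain ⟨t, ht⟩ := lead_exists Q hQ
  refine ⟨t, fun S hT hw => ?_⟩
  set H := (∑ m ∈ Q.support, if m 0 + m 1 = Q.totalDegree then Q.coeff m * (-t) ^ (m 0) else 0)
    with hH
  have hdeg : ∀ m ∈ Q.support, m 0 + m 1 ≤ Q.totalDegree := by
    intro m hm
    have := MvPolynomial.le_totalDegree hm
    rwa [Finsupp.sum_fintype _ _ (by simp), Fin.sum_univ_two] at this
  let T' : S := ⟨T, hT⟩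
  let w : S := ⟨u + t • v, hw⟩
  let lin : Polynomial S := Polynomial.C w - Polynomial.C (algebraMap ℂ S t) * Polynomial.X
  let term : (Fin 2 →₀ ℕ) → Polynomial S := fun m =>
    Polynomial.C (algebraMap ℂ S (Q.coeff m) * T' ^ (Q.totalDegree - (m 0 + m 1))) *
      (lin ^ (m 0) * Polynomial.X ^ (m 1))
  let G : Polynomial S := ∑ m ∈ Q.support, term m
  have hlin : lin.natDegree ≤ 1 := by
    have := Polynomial.natDegree_sub_le_of_le (m := 0) (n := 1) (p := Polynomial.C w)
      (q := Polynomial.C (algebraMap ℂ S t) * Polynomial.X) (by simp)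
      ((Polynomial.natDegree_C_mul_le _ _).trans Polynomial.natDegree_X_le)
    simpa using this
  have hlin1 : lin.coeff 1 = algebraMap ℂ S (-t) := by
    simp [lin, Polynomial.coeff_C]
  have hlp : ∀ k, (lin ^ k).natDegree ≤ k := by
    intro k
    simpa using Polynomial.natDegree_pow_le_of_le k hlin
  have htd : ∀ m : Fin 2 →₀ ℕ, (lin ^ (m 0) * Polynomial.X ^ (m 1) : Polynomial S).natDegree ≤ m 0 + m 1 := by
    intro m
    exact Polynomial.natDegree_mul_le_of_le (hlp _) (Polynomial.natDegree_X_pow_le _)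
  have htd' : ∀ m, (term m).natDegree ≤ m 0 + m 1 := by
    intro m
    exact (Polynomial.natDegree_C_mul_le _ _).trans (htd m)
  have hGd : G.natDegree ≤ Q.totalDegree := by
    apply Polynomial.natDegree_sum_le_of_forall_le
    intro m hm
    exact (htd' m).trans (hdeg m hm)
  have hGc : G.coeff Q.totalDegree = algebraMap ℂ S H := by
    simp only [G, Polynomial.finset_sum_coeff, hH, map_sum]
    apply Finset.sum_congr rfl
    intro m hm
    split_ifs with hc
    · simp only [term, Polynomial.coeff_C_mul]
      rw [← hc, Polynomial.coeff_mul_X_pow]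
      have := Polynomial.coeff_pow_of_natDegree_le (m := m 0) hlin
      rw [mul_one] at this
      rw [this, hlin1]
      simp
    · rw [map_zero]
      apply Polynomial.coeff_eq_zero_of_natDegree_lt
      exact (htd' m).trans_lt (lt_of_le_of_ne (hdeg m hm) hc)
  have hG0 : Polynomial.aeval v G = 0 := by
    rw [← hrel]
    simp only [G, map_sum, term]
    apply Finset.sum_congr rfl
    intro m hm
    have e1 : Polynomial.aeval v lin = u := by
      simp only [lin, map_sub, map_mul, Polynomial.aeval_C, Polynomial.aeval_X]
      show (u + t • v) - (algebraMap ℂ F t) * v = u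
      rw [Algebra.smul_def]; ring
    simp only [map_mul, map_pow, e1, Polynomial.aeval_C, Polynomial.aeval_X, mul_assoc]
    rfl
  refine ⟨Polynomial.C (algebraMap ℂ S H⁻¹) * G, ?_, ?_⟩
  · apply Polynomial.monic_of_natDegree_le_of_coeff_eq_one Q.totalDegree
    · exact (Polynomial.natDegree_C_mul_le _ _).trans hGd
    · rw [Polynomial.coeff_C_mul, hGc, ← map_mul, inv_mul_cancel₀ ht, map_one]
  · rw [← Polynomial.aeval_def, map_mul, hG0, mul_zero]

lemma integral_trans' {F : Type*} [CommRing F] [Algebra ℂ F] (S S' : Subalgebra ℂ F)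
    (h : ∀ s ∈ S, IsIntegral S' s) {x : F} (hx : IsIntegral S x) : IsIntegral S' x := by
  let C := integralClosure S' F
  let i : S →+* C := (algebraMap S F).codRestrict C (fun s => h s s.2)
  have hC : IsIntegral C x := by
    obtain ⟨P, hP, hP0⟩ := hx
    refine ⟨P.map i, hP.map _, ?_⟩
    rw [Polynomial.eval₂_map]
    exact hP0
  exact isIntegral_trans x hC

/-- the ring of functions on `ℂ × Γ` -/
abbrev FR {n : ℕ} (Γ : Set (Eu n)) := (ℂ × Γ) → ℂ

def Tf {n : ℕ} (Γ : Set (Eu n)) : FR Γ := fun q => q.1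
def Tm {n : ℕ} (Γ : Set (Eu n)) (h : Eu n → ℂ) : FR Γ := fun q => q.1 * h q.2

def Sa {n : ℕ} (Γ : Set (Eu n)) (a : Fin n → ℂ) : Subalgebra ℂ (FR Γ) :=
  (MvPolynomial.aeval (R := ℂ) ![Tf Γ, Tm Γ (lf a)]).range

lemma Tf_mem {n : ℕ} (Γ : Set (Eu n)) (a : Fin n → ℂ) : Tf Γ ∈ Sa Γ a :=
  ⟨MvPolynomial.X 0, by simp⟩
lemma Tm_mem {n : ℕ} (Γ : Set (Eu n)) (a : Fin n → ℂ) : Tm Γ (lf a) ∈ Sa Γ a :=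
  ⟨MvPolynomial.X 1, by simp⟩

lemma Sa_integral {n : ℕ} (Γ : Set (Eu n)) (a : Fin n → ℂ) (S' : Subalgebra ℂ (FR Γ))
    (h1 : IsIntegral S' (Tf Γ)) (h2 : IsIntegral S' (Tm Γ (lf a))) :
    ∀ s ∈ Sa Γ a, IsIntegral S' s := by
  rintro _ ⟨f, rfl⟩
  have : (Sa Γ a) ≤ (integralClosure S' (FR Γ)).restrictScalars ℂ := by
    rintro _ ⟨f, rfl⟩
    induction f using MvPolynomial.induction_on with
    | C c => 
      simpa using (((integralClosure S' (FR Γ)).restrictScalars ℂ).algebraMap_mem c)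
    | add p q hp hq => 
      have := add_mem hp hq
      rw [← map_add] at this; exact this
    | mul_X p i hp =>
      have h3 : ![Tf Γ, Tm Γ (lf a)] i ∈ (integralClosure S' (FR Γ)).restrictScalars ℂ := by
        fin_cases i
        · exact h1
        · exact h2
      have := mul_mem hp h3
      simpa using this
  exact this ⟨f, rfl⟩

lemma lf_rel {n : ℕ} {Γ : Set (Eu n)} (h : IsIrreducibleAlgebraicCurve Γ) (a : Fin n → ℂ)
    (k : Fin n) : ∃ Q : MvPolynomial (Fin 2) ℂ, Q ≠ 0 ∧ ∀ p ∈ Γ,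
      ∑ m ∈ Q.support, Q.coeff m * (lf a p ^ (m 0) * (p k) ^ (m 1)) = 0 := by
  have := not_algInd h ![mkA Γ (∑ i, MvPolynomial.C (a i) * MvPolynomial.X i),
    mkA Γ (MvPolynomial.X k)]
  rw [algebraicIndependent_iff] at this
  push Not at this
  obtain ⟨Q, hQ0, hQ⟩ := this
  refine ⟨Q, hQ, fun p hp => ?_⟩
  have h2 := congrArg (evA p hp) hQ0
  rw [MvPolynomial.comp_aeval_apply, MvPolynomial.aeval_def, MvPolynomial.eval₂_eq'] at h2
  rw [map_zero] at h2
  rw [← h2]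
  apply Finset.sum_congr rfl
  intro m _
  simp only [Fin.prod_univ_two, Matrix.cons_val_zero, Matrix.cons_val_one, evA_mk, evp_X]
  congr 3
  simp [evp, lf]

lemma lin_norm_aux {n : ℕ} {Γ : Set (Eu n)} (h : IsIrreducibleAlgebraicCurve Γ)
    (s : Finset (Fin n)) : ∃ a : Fin n → ℂ, ∀ j ∈ s, IsIntegral (Sa Γ a) (Tm Γ (fun p => p j)) := by
  classical
  induction s using Finset.induction_on with
  | empty => exact ⟨0, by simp⟩
  | insert k s hk ih =>
    obtain ⟨a, ha⟩ := ih
    obtain ⟨Q, hQ, hQ0⟩ := lf_rel h a k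
    obtain ⟨t, ht⟩ := integral_step (Tf Γ) (Tm Γ (lf a)) (Tm Γ (fun p => p k)) Q hQ (by
      ext ⟨τ, p, hp⟩
      rw [Finset.sum_apply]
      simp only [Pi.mul_apply, Pi.pow_apply, Tf, Tm, Pi.zero_apply, Pi.algebraMap_apply]
      rw [← mul_zero (τ ^ Q.totalDegree), ← hQ0 p hp, Finset.mul_sum]
      apply Finset.sum_congr rfl
      intro m hm
      have := MvPolynomial.le_totalDegree hm
      rw [Finsupp.sum_fintype _ _ (by simp), Fin.sum_univ_two] at this
      have e : Q.totalDegree = (Q.totalDegree - (m 0 + m 1)) + (m 0 + m 1) := by omega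
      conv_rhs => rw [e]
      simp only [Algebra.algebraMap_self, RingHom.id_apply]
      ring)
    let a' : Fin n → ℂ := a + Pi.single k t
    have ea : Tm Γ (lf a') = Tm Γ (lf a) + t • Tm Γ (fun p => p k) := by
      ext ⟨τ, p, hp⟩
      simp only [Tm, Pi.add_apply, Pi.smul_apply, lf, a', add_mul, Finset.sum_add_distrib]
      simp [Pi.single_apply]
      ring
    have hk' : IsIntegral (Sa Γ a') (Tm Γ (fun p => p k)) :=
      ht _ (Tf_mem _ _) (by rw [← ea]; exact Tm_mem _ _)
    refine ⟨a', fun j hj => ?_⟩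
    rw [Finset.mem_insert] at hj
    rcases hj with rfl | hj
    · exact hk'
    · refine integral_trans' (Sa Γ a) (Sa Γ a') (Sa_integral Γ a _ ?_ ?_) (ha j hj)
      · exact isIntegral_algebraMap (x := (⟨Tf Γ, Tf_mem _ _⟩ : Sa Γ a'))
      · have e2 : Tm Γ (lf a) = Tm Γ (lf a') - t • Tm Γ (fun p => p k) := by rw [ea]; ring
        rw [e2]
        apply IsIntegral.sub
        · exact isIntegral_algebraMap (x := (⟨Tm Γ (lf a'), Tm_mem _ _⟩ : Sa Γ a'))
        · have : t • Tm Γ (fun p => p k) = algebraMap (Sa Γ a') (FR Γ) (algebraMap ℂ (Sa Γ a') t) *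
              Tm Γ (fun p => p k) := by
            rw [Algebra.smul_def]; rfl
          rw [this]
          exact isIntegral_algebraMap.mul hk'

/-- value of a polynomial in three variables, `Y`-monic form -/
def ev3 (P : Polynomial (MvPolynomial (Fin 2) ℂ)) (τ X : ℂ) : Polynomial ℂ :=
  P.map (MvPolynomial.aeval (R := ℂ) ![τ, X] : MvPolynomial (Fin 2) ℂ →ₐ[ℂ] ℂ).toRingHom

lemma lin_norm {n : ℕ} {Γ : Set (Eu n)} (h : IsIrreducibleAlgebraicCurve Γ) :
    ∃ a : Fin n → ℂ, ∀ j, ∃ P : Polynomial (MvPolynomial (Fin 2) ℂ), P.Monic ∧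
      ∀ τ : ℂ, ∀ p ∈ Γ, (ev3 P τ (τ * lf a p)).eval (τ * p j) = 0 := by
  obtain ⟨a, ha⟩ := lin_norm_aux h Finset.univ
  refine ⟨a, fun j => ?_⟩
  obtain ⟨P, hP, hP0⟩ := ha j (Finset.mem_univ _)
  let φ := (MvPolynomial.aeval (R := ℂ) ![Tf Γ, Tm Γ (lf a)])
  let ψ : MvPolynomial (Fin 2) ℂ →ₐ[ℂ] Sa Γ a := φ.codRestrict (Sa Γ a) (fun f => ⟨f, rfl⟩)
  have hψ : Function.Surjective ψ := by
    rintro ⟨_, f, rfl⟩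
    exact ⟨f, rfl⟩
  obtain ⟨P', hP', -, hm⟩ := Polynomial.lifts_and_natDegree_eq_and_monic
    (f := ψ.toRingHom) (p := P) (by
      rw [Polynomial.lifts_iff_coeff_lifts]
      intro i
      exact hψ _) hP
  refine ⟨P', hm, fun τ p hp => ?_⟩
  have hP0' := hP0
  rw [← hP', Polynomial.eval₂_map] at hP0'
  have h3 := congrArg (Pi.evalRingHom (fun _ : ℂ × Γ => ℂ) ⟨τ, p, hp⟩) hP0'
  rw [Polynomial.hom_eval₂, map_zero] at h3
  rw [ev3, Polynomial.eval_map, ← h3]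
  congr 1
  apply MvPolynomial.ringHom_ext
  · intro r; simp [φ, ψ]
  · intro i
    fin_cases i
    · have : (φ (MvPolynomial.X 0)) (τ, ⟨p, hp⟩) = τ := by simp [φ, Tf]
      simp only [Fin.zero_eta, Fin.mk_one]
      simp
      exact this.symm
    · have : (φ (MvPolynomial.X 1)) (τ, ⟨p, hp⟩) = τ * lf a p := by simp [φ, Tm]
      simp only [Fin.zero_eta, Fin.mk_one]
      simp
      exact this.symm

def Good {n : ℕ} (Γ : Set (Eu n)) (a : Fin n → ℂ) : Prop :=
  ∀ j, ∃ P : Polynomial (MvPolynomial (Fin 2) ℂ), P.Monic ∧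
      ∀ τ : ℂ, ∀ p ∈ Γ, (ev3 P τ (τ * lf a p)).eval (τ * p j) = 0

lemma ev3_monic {P : Polynomial (MvPolynomial (Fin 2) ℂ)} (hP : P.Monic) (τ X : ℂ) :
    (ev3 P τ X).Monic := hP.map _

lemma ev3_natDegree {P : Polynomial (MvPolynomial (Fin 2) ℂ)} (hP : P.Monic) (τ X : ℂ) :
    (ev3 P τ X).natDegree = P.natDegree := hP.natDegree_map _

lemma ev3_coeff (P : Polynomial (MvPolynomial (Fin 2) ℂ)) (τ X : ℂ) (i : ℕ) :
    (ev3 P τ X).coeff i = MvPolynomial.eval ![τ, X] (P.coeff i) := by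
  simp [ev3]

lemma ev3_coeff_cont (P : Polynomial (MvPolynomial (Fin 2) ℂ)) (i : ℕ) :
    Continuous fun z : ℂ × ℂ => (ev3 P z.1 z.2).coeff i := by
  simp only [ev3_coeff]
  apply (MvPolynomial.continuous_eval (P.coeff i)).comp
  apply continuous_pi
  intro j
  fin_cases j
  · exact continuous_fst
  · exact continuous_snd

lemma ev3_eval_cont {P : Polynomial (MvPolynomial (Fin 2) ℂ)} (hP : P.Monic) :
    Continuous fun z : (ℂ × ℂ) × ℂ => (ev3 P z.1.1 z.1.2).eval z.2 := by
  have : ∀ z : (ℂ × ℂ) × ℂ, (ev3 P z.1.1 z.1.2).eval z.2 =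
      ∑ i ∈ Finset.range (P.natDegree + 1), (ev3 P z.1.1 z.1.2).coeff i * z.2 ^ i := by
    intro z
    rw [Polynomial.eval_eq_sum_range, ev3_natDegree hP]
  simp only [this]
  apply continuous_finsetSum
  intro i _
  exact ((ev3_coeff_cont P i).comp continuous_fst).mul (continuous_snd.pow i)

lemma ev3_root_bound {P : Polynomial (MvPolynomial (Fin 2) ℂ)} (hP : P.Monic) (B : ℝ) :
    ∃ M : ℝ, ∀ τ X y : ℂ, ‖τ‖ ≤ 1 → ‖X‖ ≤ B → (ev3 P τ X).eval y = 0 → ‖y‖ ≤ M := by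
  have hc : IsCompact (closedBall (0:ℂ) 1 ×ˢ closedBall (0:ℂ) B) :=
    (isCompact_closedBall _ _).prod (isCompact_closedBall _ _)
  have : ∀ i, ∃ M, ∀ z ∈ (closedBall (0:ℂ) 1 ×ˢ closedBall (0:ℂ) B),
      ‖(ev3 P z.1 z.2).coeff i‖ ≤ M := fun i =>
    hc.exists_bound_of_continuousOn (ev3_coeff_cont P i).continuousOn
  choose M hM using this
  let N : NNReal := ((Finset.range P.natDegree).sup fun i => (M i).toNNReal) + 1
  refine ⟨N, fun τ X y hτ hX hy => ?_⟩
  have h1 := Polynomial.IsRoot.norm_lt_cauchyBound (ev3_monic hP τ X).ne_zero hy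
  have h2 : (ev3 P τ X).cauchyBound ≤ N := by
    simp only [Polynomial.cauchyBound, (ev3_monic hP τ X).leadingCoeff, ev3_natDegree hP, nnnorm_one,
      div_one, N]
    gcongr with i hi
    have := hM i (τ, X) ⟨by simpa using hτ, by simpa using hX⟩
    rw [← NNReal.coe_le_coe]
    exact this.trans (Real.le_coe_toNNReal _)
  exact_mod_cast (h1.le.trans h2)

lemma lf_cont {n : ℕ} (a : Fin n → ℂ) : Continuous (lf a : Eu n → ℂ) := by
  unfold lf
  fun_prop

lemma lf_add {n : ℕ} (a : Fin n → ℂ) (p q : Eu n) : lf a (p + q) = lf a p + lf a q := by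
  simp [lf, mul_add, Finset.sum_add_distrib]

lemma lf_smul {n : ℕ} (a : Fin n → ℂ) (c : ℂ) (q : Eu n) : lf a (c • q) = c * lf a q := by
  simp only [lf, PiLp.smul_apply, smul_eq_mul, Finset.mul_sum]
  apply Finset.sum_congr rfl; intros; ring

lemma lf_sub {n : ℕ} (a : Fin n → ℂ) (p q : Eu n) : lf a (p - q) = lf a p - lf a q := by
  simp [lf, mul_sub, Finset.sum_sub_distrib]

lemma lf_bound {n : ℕ} (a : Fin n → ℂ) : ∃ N : ℝ, 1 ≤ N ∧ ∀ p : Eu n, ‖lf a p‖ ≤ N * ‖p‖ := by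
  refine ⟨1 + ∑ i, ‖a i‖, ?_, fun p => ?_⟩
  · have : 0 ≤ ∑ i, ‖a i‖ := Finset.sum_nonneg fun _ _ => norm_nonneg _
    linarith
  · have : ‖lf a p‖ ≤ ∑ i, ‖a i‖ * ‖p‖ := by
      apply (norm_sum_le _ _).trans
      apply Finset.sum_le_sum
      intro i _
      rw [norm_mul]
      gcongr
      exact PiLp.norm_apply_le p i
    rw [add_mul, Finset.sum_mul]
    have := norm_nonneg p
    linarith

lemma norm_le_sum {n : ℕ} (p : Eu n) : ‖p‖ ≤ ∑ i, ‖p i‖ := by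
  have h : p = ∑ i, p i • EuclideanSpace.single i (1:ℂ) := by
    ext j
    simp [Pi.single_apply]
  have h2 := norm_sum_le Finset.univ (fun i => p i • EuclideanSpace.single i (1:ℂ))
  rw [← h] at h2
  apply h2.trans
  apply Finset.sum_le_sum
  intro i _
  rw [norm_smul]
  simp

lemma fiber_fin {n : ℕ} {Γ : Set (Eu n)} {a : Fin n → ℂ} (hG : Good Γ a) :
    ∃ d : ℕ, ∀ x, ∃ s : Finset (Eu n), s.card ≤ d ∧ ∀ p ∈ Γ, lf a p = x → p ∈ s := by
  classical
  choose P hP hP0 using hG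
  refine ⟨∏ j, (P j).natDegree, fun x => ?_⟩
  let t : Finset (Fin n → ℂ) := Fintype.piFinset fun j => (ev3 (P j) 1 x).roots.toFinset
  refine ⟨t.image (WithLp.toLp 2), ?_, ?_⟩
  · apply Finset.card_image_le.trans
    rw [Fintype.card_piFinset]
    apply Finset.prod_le_prod' 
    intro j _
    apply (Multiset.toFinset_card_le _).trans
    apply (Polynomial.card_roots' _).trans
    rw [ev3_natDegree (hP j)]
  · intro p hp hx
    rw [Finset.mem_image]
    refine ⟨fun j => p j, ?_, rfl⟩
    rw [Fintype.mem_piFinset]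
    intro j
    rw [Multiset.mem_toFinset, Polynomial.mem_roots (ev3_monic (hP j) _ _).ne_zero]
    have := hP0 j 1 p hp
    rw [one_mul, one_mul, hx] at this
    exact this

lemma proper {n : ℕ} {Γ : Set (Eu n)} {a : Fin n → ℂ} (hG : Good Γ a) :
    ∃ C : ℝ, 1 ≤ C ∧ ∀ p ∈ Γ, ‖p‖ ≤ C * (1 + ‖lf a p‖) := by
  choose P hP hP0 using hG
  choose M hM using fun j => ev3_root_bound (hP j) 1
  refine ⟨1 + ∑ j, |M j|, ?_, fun p hp => ?_⟩
  · have : 0 ≤ ∑ j, |M j| := Finset.sum_nonneg fun _ _ => abs_nonneg _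
    linarith
  have hpos : 0 < 1 + ‖lf a p‖ := by positivity
  have h1 : ∀ j, ‖p j‖ ≤ |M j| * (1 + ‖lf a p‖) := by
    intro j
    let τ : ℂ := ((1 + ‖lf a p‖ : ℝ) : ℂ)⁻¹
    have hτ : ‖τ‖ = (1 + ‖lf a p‖)⁻¹ := by
      simp only [τ, norm_inv, Complex.norm_real, Real.norm_eq_abs, abs_of_pos hpos]
    have := hM j τ (τ * lf a p) (τ * p j) (by
      rw [hτ]; apply inv_le_one_of_one_le₀; linarith [norm_nonneg (lf a p)]) (by
      rw [norm_mul, hτ, inv_mul_le_iff₀ hpos]; linarith) (hP0 j τ p hp)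
    rw [norm_mul, hτ, inv_mul_le_iff₀ hpos] at this
    calc ‖p j‖ ≤ _ := this
      _ ≤ _ := by rw [mul_comm]; gcongr; exact le_abs_self _
  calc ‖p‖ ≤ ∑ j, ‖p j‖ := norm_le_sum p
    _ ≤ ∑ j, |M j| * (1 + ‖lf a p‖) := Finset.sum_le_sum fun j _ => h1 j
    _ ≤ _ := by rw [← Finset.sum_mul]; gcongr; linarith

lemma alg_closed {n : ℕ} {Γ : Set (Eu n)} (h : IsAlgebraicSet Γ) : IsClosed Γ := by
  obtain ⟨S, rfl⟩ := h
  simp only [setOf_forall]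
  apply isClosed_iInter; intro f
  apply isClosed_iInter; intro _
  apply isClosed_eq _ continuous_const
  exact (MvPolynomial.continuous_eval f).comp (by fun_prop)

lemma evp_cont {n : ℕ} (f : MvPolynomial (Fin n) ℂ) : Continuous fun p : Eu n => evp p f := by
  simp only [evp_eq]
  exact (MvPolynomial.continuous_eval f).comp (by fun_prop)

def LP {n : ℕ} (a : Fin n → ℂ) : MvPolynomial (Fin n) ℂ :=
  ∑ i, MvPolynomial.C (a i) * MvPolynomial.X i

lemma evp_LP {n : ℕ} (a : Fin n → ℂ) (p : Eu n) : evp p (LP a) = lf a p := by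
  simp [LP, evp, lf]

def gz {n : ℕ} (Γ : Set (Eu n)) (a : Fin n → ℂ) : Polynomial ℂ →ₐ[ℂ] CR Γ :=
  Polynomial.aeval (mkA Γ (LP a))

lemma evA_gz {n : ℕ} {Γ : Set (Eu n)} {a : Fin n → ℂ} (p) (hp : p ∈ Γ) (F : Polynomial ℂ) :
    evA p hp (gz Γ a F) = F.eval (lf a p) := by
  rw [gz, ← Polynomial.aeval_algHom_apply, evA_mk, evp_LP]
  simp [Polynomial.aeval_def]

lemma gz_inj {n : ℕ} {Γ : Set (Eu n)} {a : Fin n → ℂ} (h : IsIrreducibleAlgebraicCurve Γ)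
    (hG : Good Γ a) : Function.Injective (gz Γ a) := by
  rw [injective_iff_map_eq_zero]
  intro F hF
  by_contra hF0
  apply h.2.1
  obtain ⟨d, hd⟩ := fiber_fin hG
  choose s hs hs' using hd
  apply ((F.roots.toFinset.finite_toSet).biUnion fun x _ => (s x).finite_toSet).subset
  intro p hp
  rw [mem_iUnion₂]
  refine ⟨lf a p, ?_, hs' _ p hp rfl⟩
  simp only [Finset.mem_coe, Multiset.mem_toFinset]
  rw [Polynomial.mem_roots hF0]
  have := evA_gz (a := a) p hp F
  rw [hF, map_zero] at this
  exact this.symm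

lemma gz_integral {n : ℕ} {Γ : Set (Eu n)} {a : Fin n → ℂ} (hG : Good Γ a) :
    (gz Γ a).toRingHom.IsIntegral := by
  let inst : Algebra (Polynomial ℂ) (CR Γ) := (gz Γ a).toRingHom.toAlgebra
  have hX : ∀ j, IsIntegral (Polynomial ℂ) (mkA Γ (MvPolynomial.X j)) := by
    intro j
    obtain ⟨P, hP, hP0⟩ := hG j
    let θ : MvPolynomial (Fin 2) ℂ →ₐ[ℂ] Polynomial ℂ := MvPolynomial.aeval ![1, Polynomial.X]
    refine ⟨P.map θ.toRingHom, hP.map _, ?_⟩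
    apply CR_ext
    intro p hp
    have h2 := hP0 1 p hp
    rw [one_mul, one_mul] at h2
    rw [← h2, Polynomial.eval₂_map, ev3, Polynomial.eval_map]
    have : ∀ (f : MvPolynomial (Fin 2) ℂ →+* CR Γ) x, evA p hp (P.eval₂ f x) =
      P.eval₂ ((evA p hp : CR Γ →ₐ[ℂ] ℂ).toRingHom.comp f) (evA p hp x) := by
      intro f x
      exact Polynomial.hom_eval₂ P f (evA p hp : CR Γ →ₐ[ℂ] ℂ).toRingHom x
    rw [this, evA_mk, evp_X]
    congr 1
    have h3 : ∀ F, (evA p hp) ((algebraMap (Polynomial ℂ) (CR Γ)) F) = F.eval (lf a p) :=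
      fun F => evA_gz p hp F
    apply MvPolynomial.ringHom_ext
    · intro r
      simp [θ, h3]
    · intro i
      fin_cases i <;> simp [θ, h3]
  intro b
  obtain ⟨f, rfl⟩ := Ideal.Quotient.mkₐ_surjective ℂ (vI Γ) b
  show IsIntegral (Polynomial ℂ) (mkA Γ f)
  induction f using MvPolynomial.induction_on with
  | C c =>
    have : mkA Γ (MvPolynomial.C c) = algebraMap (Polynomial ℂ) (CR Γ) (Polynomial.C c) := by
      show _ = gz Γ a _
      simp only [gz, Polynomial.aeval_C]
      rfl
    rw [this]
    exact isIntegral_algebraMap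
  | add p q hp hq => rw [map_add]; exact hp.add hq
  | mul_X p i hp => rw [map_mul]; exact hp.mul (hX i)

lemma elim {n : ℕ} {Γ : Set (Eu n)} {a : Fin n → ℂ} (h : IsIrreducibleAlgebraicCurve Γ)
    (hG : Good Γ a) (f : MvPolynomial (Fin n) ℂ) :
    ∃ P : Polynomial (Polynomial ℂ), P.Monic ∧
      (∀ p ∈ Γ, (P.map (Polynomial.evalRingHom (lf a p))).eval (evp p f) = 0) ∧
      ∀ x η, (P.map (Polynomial.evalRingHom x)).eval η = 0 → ∃ p ∈ Γ, lf a p = x ∧ evp p f = η := by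
  have hpr := vI_prime h
  let inst : Algebra (Polynomial ℂ) (CR Γ) := (gz Γ a).toRingHom.toAlgebra
  have hint : IsIntegral (Polynomial ℂ) (mkA Γ f) := gz_integral hG _
  have hdom : IsDomain (CR Γ) := Ideal.Quotient.isDomain _
  have : FaithfulSMul (Polynomial ℂ) (CR Γ) :=
    (faithfulSMul_iff_algebraMap_injective _ _).2 (gz_inj h hG)
  have : Module.IsTorsionFree (Polynomial ℂ) (CR Γ) := inferInstance
  refine ⟨minpoly (Polynomial ℂ) (mkA Γ f), minpoly.monic hint, ?_, ?_⟩
  · intro p hp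
    have h0 := congrArg (evA p hp).toRingHom (minpoly.aeval (Polynomial ℂ) (mkA Γ f))
    rw [Polynomial.aeval_def, Polynomial.hom_eval₂, map_zero] at h0
    rw [Polynomial.eval_map]
    rw [← h0]
    congr 1
    ext
    · simp
      exact ((evA_gz p hp _).trans (by simp)).symm
    · simp
      exact ((evA_gz p hp _).trans (by simp)).symm
  · intro x η hη
    let g : Polynomial (Polynomial ℂ) →ₐ[ℂ] CR Γ := Polynomial.aevalTower (gz Γ a) (mkA Γ f)
    have hgi : g.toRingHom.IsIntegral := by
      apply RingHom.IsIntegral.tower_top (Polynomial.C) g.toRingHom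
      have : g.toRingHom.comp Polynomial.C = (gz Γ a).toRingHom := by
        ext <;> simp [g]
      rw [this]
      exact gz_integral hG
    let ψ : Polynomial (Polynomial ℂ) →ₐ[ℂ] ℂ :=
      Polynomial.aevalTower (Polynomial.aeval x) η
    have hψ : ∀ r, ψ r = (r.map (Polynomial.evalRingHom x)).eval η := by
      intro r
      rw [Polynomial.eval_map]
      show Polynomial.eval₂ _ _ _ = _
      congr 1
    obtain ⟨φ, hφ⟩ := lying_over g hgi ψ (by
      intro r hr
      have h1 : Polynomial.aeval (mkA Γ f) r = 0 := hr
      rw [minpoly.isIntegrallyClosed_dvd_iff hint] at h1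
      obtain ⟨s, rfl⟩ := h1
      rw [map_mul, hψ, hη, zero_mul])
    obtain ⟨p, hp, hp2⟩ := point_of_hom h.1 φ
    refine ⟨p, hp, ?_, ?_⟩
    · have := hφ (Polynomial.C Polynomial.X)
      rw [hp2, hψ] at this
      simp [g] at this
      rw [← this]
      exact ((evA_gz p hp _).trans (by simp)).symm
    · have := hφ Polynomial.X
      rw [hp2, hψ] at this
      simp [g] at this
      rw [← this]
      rfl

def Chain {n : ℕ} (Z : Set (Eu n)) (r : ℝ) : Eu n → Eu n → Prop :=
  Relation.ReflTransGen (fun a b => a ∈ Z ∧ b ∈ Z ∧ dist a b < r)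

lemma Chain.mono' {n : ℕ} {Z W : Set (Eu n)} {r s : ℝ} {p q : Eu n} (h : Chain Z r p q)
    (hZ : Z ⊆ W) (hr : r ≤ s) : Chain W s p q := by
  refine Relation.ReflTransGen.mono ?_ _ _ h
  intro a b hab
  exact ⟨hZ hab.1, hZ hab.2.1, hab.2.2.trans_le hr⟩

lemma Chain.symm' {n : ℕ} {Z : Set (Eu n)} {r : ℝ} {p q : Eu n} (h : Chain Z r p q) :
    Chain Z r q p := by
  unfold Chain at h
  induction h with
  | refl => exact Relation.ReflTransGen.refl
  | tail _ hs ih =>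
    exact Relation.ReflTransGen.head ⟨hs.2.1, hs.1, by rw [dist_comm]; exact hs.2.2⟩ ih

lemma Chain.restrict {n : ℕ} {Z W : Set (Eu n)} {r : ℝ} {p q : Eu n} (h : Chain Z r p q)
    (hW : ∀ b, Chain Z r p b → b ∈ W) : Chain (Z ∩ W) r p q := by
  unfold Chain at h
  induction h with
  | refl => exact Relation.ReflTransGen.refl
  | @tail b c hb hs ih =>
    exact ih.tail ⟨⟨hs.1, hW _ hb⟩, ⟨hs.2.1, hW _ (hb.tail hs)⟩, hs.2.2⟩

lemma prod_ge {m : Multiset ℂ} {ρ : ℝ} (hρ : 0 < ρ) (y : ℂ) (h : ∀ s ∈ m, ρ ≤ ‖y - s‖) :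
    ρ ^ (Multiset.card m) ≤ ‖(m.map (fun s => y - s)).prod‖ := by
  induction m using Multiset.induction_on with
  | empty => simp
  | cons s m ih =>
    rw [Multiset.map_cons, Multiset.prod_cons, Multiset.card_cons, norm_mul, pow_succ, mul_comm]
    have h1 := ih fun t ht => h t (Multiset.mem_cons_of_mem ht)
    have h2 := h s (Multiset.mem_cons_self _ _)
    exact mul_le_mul h2 h1 (by positivity) (norm_nonneg _)

lemma near_root {Q : Polynomial ℂ} (hQ : Q.Monic) {ρ : ℝ} (hρ : 0 < ρ) (y : ℂ)
    (h : ‖Q.eval y‖ < ρ ^ Q.natDegree) : ∃ s, Q.eval s = 0 ∧ ‖y - s‖ < ρ := by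
  by_contra hcon
  push Not at hcon
  have hs := IsAlgClosed.splits Q
  have h1 := prod_ge (m := Q.roots) hρ y (fun s hs => hcon s (Polynomial.isRoot_of_mem_roots hs))
  rw [← hs.natDegree_eq_card_roots] at h1
  have h2 : Q.eval y = (Q.roots.map (fun s => y - s)).prod := by
    conv_lhs => rw [hs.eq_prod_roots, hQ.leadingCoeff]
    rw [map_one, one_mul, Polynomial.eval_multiset_prod, Multiset.map_map]
    simp
  rw [h2] at h
  exact absurd h (not_lt.2 h1)

lemma separate {n : ℕ} (s : Finset (Eu n)) (p : Eu n) :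
    ∃ g : MvPolynomial (Fin n) ℂ, evp p g = 0 ∧ ∀ q ∈ s, q ≠ p → evp q g ≠ 0 := by
  classical
  have : ∀ q : Eu n, q ≠ p → ∃ j, q j ≠ p j := by
    intro q hq
    by_contra hcon
    push Not at hcon
    exact hq (by ext j; exact hcon j)
  have : ∀ q : Eu n, ∃ u : MvPolynomial (Fin n) ℂ, evp p u = 1 ∧ (q ≠ p → evp q u = 0) := by
    intro q
    by_cases hq : q = p
    · exact ⟨1, by simp, fun h => absurd hq h⟩
    · obtain ⟨j, hj⟩ := this q hq
      refine ⟨MvPolynomial.C ((p j - q j)⁻¹) * (MvPolynomial.X j - MvPolynomial.C (q j)), ?_, ?_⟩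
      · have : p j - q j ≠ 0 := sub_ne_zero.2 hj.symm
        simp [evp, this]
      · intro _; simp [evp]
  choose u hu hu' using this
  refine ⟨1 - ∏ q ∈ s, u q, ?_, ?_⟩
  · rw [map_sub, map_prod, Finset.prod_eq_one fun q _ => hu q, map_one, sub_self]
  · intro q hq hqp
    rw [map_sub, map_prod, Finset.prod_eq_zero hq (hu' q hqp)]
    simp

lemma compact_pre {n : ℕ} {Γ : Set (Eu n)} {a : Fin n → ℂ} (h : IsIrreducibleAlgebraicCurve Γ)
    (hG : Good Γ a) {K : Set ℂ} (hK : IsCompact K) : IsCompact (Γ ∩ lf a ⁻¹' K) := by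
  obtain ⟨C, hC1, hC⟩ := proper hG
  obtain ⟨M, hM⟩ := hK.isBounded.exists_norm_le
  apply (isCompact_closedBall (0 : Eu n) (C * (1 + M))).of_isClosed_subset
  · exact (alg_closed h.1).inter (hK.isClosed.preimage (lf_cont a))
  · rintro p ⟨hp, hpK⟩
    rw [mem_closedBall_zero_iff]
    apply (hC p hp).trans
    gcongr
    exact hM _ hpK

lemma open_lift {n : ℕ} {Γ : Set (Eu n)} {a : Fin n → ℂ} (h : IsIrreducibleAlgebraicCurve Γ)
    (hG : Good Γ a) {p : Eu n} (hp : p ∈ Γ) {r : ℝ} (hr : 0 < r) :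
    ∃ δ > 0, ∀ x, ‖x - lf a p‖ < δ → ∃ q ∈ Γ, lf a q = x ∧ dist q p < r := by
  obtain ⟨d, hd⟩ := fiber_fin hG
  obtain ⟨s, -, hs⟩ := hd (lf a p)
  obtain ⟨g, hgp, hg⟩ := separate s p
  obtain ⟨P, hP, hP1, hP2⟩ := elim h hG g
  let K : Set (Eu n) := (Γ ∩ lf a ⁻¹' closedBall (lf a p) 1) \ ball p r
  have hK : IsCompact K := (compact_pre h hG (isCompact_closedBall _ _)).diff isOpen_ball
  let φ : Eu n → ℝ := fun q => ‖lf a q - lf a p‖ + ‖evp q g‖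
  have hφ : Continuous φ := by
    exact ((lf_cont a).sub continuous_const).norm.add (evp_cont g).norm
  have hε : ∃ ε > 0, ∀ q ∈ K, ε ≤ φ q := by
    rcases K.eq_empty_or_nonempty with hE | hE
    · exact ⟨1, one_pos, by simp [hE]⟩
    · obtain ⟨q, hq, hmin⟩ := hK.exists_isMinOn hE hφ.continuousOn
      refine ⟨φ q, ?_, fun q' hq' => hmin hq'⟩
      by_contra hcon
      have h1 : ‖lf a q - lf a p‖ = 0 := le_antisymm (by
        have := norm_nonneg (evp q g)
        simp only [φ] at hcon
        linarith) (norm_nonneg _)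
      have h2 : ‖evp q g‖ = 0 := le_antisymm (by
        simp only [φ] at hcon
        linarith) (norm_nonneg _)
      rw [norm_eq_zero, sub_eq_zero] at h1
      rw [norm_eq_zero] at h2
      refine hg q (hs q hq.1.1 h1) ?_ h2
      rintro rfl
      exact hq.2 (mem_ball_self hr)
  obtain ⟨ε, hε0, hε⟩ := hε
  have hcont : Continuous fun x => ‖(P.map (Polynomial.evalRingHom x)).eval 0‖ := by
    simp only [← Polynomial.coeff_zero_eq_eval_zero, Polynomial.coeff_map]
    exact (P.coeff 0).continuous.norm
  have h0 : (fun x => ‖(P.map (Polynomial.evalRingHom x)).eval 0‖) (lf a p) < (ε/2) ^ P.natDegree := by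
    have := hP1 p hp
    rw [hgp] at this
    simp only [this, norm_zero]
    positivity
  have hev := hcont.continuousAt.eventually_lt continuousAt_const h0
  obtain ⟨δ, hδ, hδ2⟩ := Metric.eventually_nhds_iff.1 hev
  refine ⟨min δ (min 1 (ε/2)), by positivity, fun x hx => ?_⟩
  have hx1 := hx.trans_le (min_le_left _ _)
  have hx2 := (hx.trans_le (min_le_right _ _)).trans_le (min_le_left _ _)
  have hx3 := (hx.trans_le (min_le_right _ _)).trans_le (min_le_right _ _)
  have h3 := hδ2 (y := x) (by rw [dist_eq_norm]; exact hx1)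
  obtain ⟨η, hη, hη2⟩ := near_root (Q := P.map (Polynomial.evalRingHom x)) (hP.map _)
    (half_pos hε0) 0 (by rw [hP.natDegree_map]; exact h3)
  obtain ⟨q, hq, hqx, hqg⟩ := hP2 x η hη
  refine ⟨q, hq, hqx, ?_⟩
  by_contra hcon
  have := hε q ⟨⟨hq, by
    rw [mem_preimage, hqx, mem_closedBall, dist_eq_norm]; exact hx2.le⟩, hcon⟩
  simp only [φ, hqx, hqg] at this
  rw [zero_sub, norm_neg] at hη2
  linarith

lemma surj {n : ℕ} {Γ : Set (Eu n)} {a : Fin n → ℂ} (h : IsIrreducibleAlgebraicCurve Γ)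
    (hG : Good Γ a) (x : ℂ) : ∃ q ∈ Γ, lf a q = x := by
  obtain ⟨P, hP, hP1, hP2⟩ := elim h hG 0
  obtain ⟨p, hp⟩ := h.2.1.nonempty
  have hd : (P.map (Polynomial.evalRingHom x)).degree ≠ 0 := by
    intro h0
    have h1 : P.natDegree = 0 := by
      rw [← hP.natDegree_map (Polynomial.evalRingHom x)]
      exact Polynomial.natDegree_eq_of_degree_eq_some h0
    have h2 := hP1 p hp
    rw [hP.natDegree_eq_zero.1 h1] at h2
    simp at h2
  obtain ⟨η, hη⟩ := IsAlgClosed.exists_root _ hd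
  obtain ⟨q, hq, hqx, -⟩ := hP2 x η hη
  exact ⟨q, hq, hqx⟩

lemma chain_lift {n : ℕ} {Γ : Set (Eu n)} {a : Fin n → ℂ} (h : IsIrreducibleAlgebraicCurve Γ)
    (hG : Good Γ a) {p : Eu n} (hp : p ∈ Γ) (x : ℂ) {r : ℝ} (hr : 0 < r) :
    ∃ q ∈ Γ, lf a q = x ∧
      Chain (Γ ∩ lf a ⁻¹' closedBall x (‖lf a p - x‖)) r p q := by
  let γ : ℝ → ℂ := fun t => lf a p + (t : ℂ) * (x - lf a p)
  have hγ : Continuous γ := by fun_prop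
  let Z := Γ ∩ lf a ⁻¹' (γ '' Icc 0 1)
  have hZ : IsCompact Z := compact_pre h hG (isCompact_Icc.image hγ)
  let C := {q | q ∈ Z ∧ Chain Z r p q}
  have hpZ : p ∈ Z := ⟨hp, 0, by simp, by simp [γ]⟩
  have hC : IsClosed C := by
    rw [← closure_subset_iff_isClosed]
    intro q hq
    have hqZ : q ∈ Z := by
      have : closure C ⊆ closure Z := closure_mono fun _ h => h.1
      rw [hZ.isClosed.closure_eq] at this
      exact this hq
    obtain ⟨q', hq', hd⟩ := Metric.mem_closure_iff.1 hq r hr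
    exact ⟨hqZ, Relation.ReflTransGen.tail hq'.2 ⟨hq'.1, hqZ, by rw [dist_comm]; exact hd⟩⟩
  have hCc : IsCompact C := hZ.of_isClosed_subset hC fun _ h => h.1
  let S := γ ⁻¹' (lf a '' C)
  have hS : IsClosed S := ((hCc.image (lf_cont a)).isClosed).preimage hγ
  have hsub : Icc (0:ℝ) 1 ⊆ S := by
    apply IsClosed.Icc_subset_of_forall_mem_nhdsWithin (hS.inter isClosed_Icc)
    · exact ⟨p, ⟨hpZ, Relation.ReflTransGen.refl⟩, by simp [γ]⟩
    · rintro t ⟨⟨q, hq, hqt⟩, ht0, ht1⟩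
      obtain ⟨δ, hδ, hl⟩ := open_lift h hG hq.1.1 hr
      have h1 : ∀ᶠ t' in nhds t, ‖γ t' - lf a q‖ < δ := by
        apply ContinuousAt.eventually_lt (f := fun t' => ‖γ t' - lf a q‖) (g := fun _ => δ)
        · exact (hγ.sub continuous_const).norm.continuousAt
        · exact continuousAt_const
        · simpa [hqt] using hδ
      filter_upwards [mem_nhdsWithin_of_mem_nhds h1, Ioo_mem_nhdsGT ht1] with t' h2 h3
      obtain ⟨q', hq', hx, hd⟩ := hl _ h2
      have : q' ∈ Z := ⟨hq', t', ⟨ht0.trans h3.1.le, h3.2.le⟩, hx.symm⟩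
      exact ⟨q', ⟨this, Relation.ReflTransGen.tail hq.2 ⟨hq.1, this, by rw [dist_comm]; exact hd⟩⟩, hx⟩
  obtain ⟨q, hq, hqx⟩ := hsub (right_mem_Icc.2 zero_le_one)
  refine ⟨q, hq.1.1, by rw [hqx]; simp [γ], hq.2.mono' ?_ le_rfl⟩
  rintro z ⟨hz, t, ht, hzt⟩
  refine ⟨hz, ?_⟩
  rw [mem_preimage, mem_closedBall, dist_eq_norm, ← hzt]
  have : γ t - x = ((1 - t : ℝ) : ℂ) * (lf a p - x) := by simp only [γ]; push_cast; ring
  rw [this, norm_mul, Complex.norm_real, Real.norm_eq_abs, abs_of_nonneg (by linarith [ht.2])]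
  have := norm_nonneg (lf a p - x)
  nlinarith [ht.1]

lemma chain_diam {P : Polynomial (MvPolynomial (Fin 2) ℂ)} (hP : P.Monic) (B : ℝ) {ε : ℝ}
    (hε : 0 < ε) : ∃ η > 0, ∀ τ x : ℂ, ‖τ‖ ≤ 1 → ‖x‖ ≤ B → ∀ p q : ℂ × ℂ,
      Relation.ReflTransGen (fun u v : ℂ × ℂ => (‖u.1 - x‖ ≤ η ∧ (ev3 P τ u.1).eval u.2 = 0) ∧
        (‖v.1 - x‖ ≤ η ∧ (ev3 P τ v.1).eval v.2 = 0) ∧ ‖u.2 - v.2‖ < η) p q →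
      ‖q.2 - p.2‖ ≤ ε := by
  let e := P.natDegree
  let ρ : ℝ := ε / (3 * e + 2)
  have hρ : 0 < ρ := by positivity
  have hρe : (3 * e + 2) * ρ = ε := by simp only [ρ]; field_simp
  obtain ⟨M, hM⟩ := ev3_root_bound hP (B + 1)
  let K := (closedBall (0:ℂ) 1 ×ˢ closedBall (0:ℂ) (B + 1)) ×ˢ closedBall (0:ℂ) M
  have hK : IsCompact K := ((isCompact_closedBall _ _).prod (isCompact_closedBall _ _)).prod
    (isCompact_closedBall _ _)
  have huc := hK.uniformContinuousOn_of_continuous (ev3_eval_cont hP).continuousOn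
  obtain ⟨δ, hδ, hδ2⟩ := Metric.uniformContinuousOn_iff.1 huc (ρ ^ e) (by positivity)
  refine ⟨min ρ (min 1 (δ / 2)), by positivity, fun τ x hτ hx p q hpq => ?_⟩
  set η := min ρ (min 1 (δ / 2)) with hηdef
  have hη1 : η ≤ ρ := min_le_left _ _
  have hη2 : η ≤ 1 := (min_le_right _ _).trans (min_le_left _ _)
  have hη3 : η ≤ δ / 2 := (min_le_right _ _).trans (min_le_right _ _)
  have hgood : ∀ u : ℂ × ℂ, (‖u.1 - x‖ ≤ η ∧ (ev3 P τ u.1).eval u.2 = 0) →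
      ∃ s, (ev3 P τ x).eval s = 0 ∧ ‖u.2 - s‖ < ρ := by
    rintro ⟨X, Y⟩ ⟨h1, h2⟩
    simp only at h1 h2 ⊢
    have hX : ‖X‖ ≤ B + 1 := by
      have : X = x + (X - x) := by ring
      rw [this]
      exact (norm_add_le _ _).trans (add_le_add hx (h1.trans hη2))
    have hY := hM τ X Y hτ hX h2
    apply near_root (ev3_monic hP _ _) hρ
    rw [ev3_natDegree hP]
    have := hδ2 ((τ, x), Y) (by simp [K, hτ, hY]; linarith) ((τ, X), Y) (by simp [K, hτ, hX, hY]) (by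
      simp only [Prod.dist_eq, dist_self]
      rw [max_eq_left (le_max_of_le_left le_rfl), max_eq_right dist_nonneg, dist_comm, dist_eq_norm]
      linarith)
    simpa [h2] using this
  have hgap : ∃ j : ℕ, j ≤ e ∧ ∀ s, (ev3 P τ x).eval s = 0 →
      ¬ ((3 * j + 1) * ρ ≤ ‖s - p.2‖ ∧ ‖s - p.2‖ < (3 * j + 4) * ρ) := by
    by_contra hcon
    push Not at hcon
    have : ∀ j : Fin (e + 1), ∃ s : {s // s ∈ (ev3 P τ x).roots.toFinset},
        (3 * (j:ℕ) + 1) * ρ ≤ ‖s.1 - p.2‖ ∧ ‖s.1 - p.2‖ < (3 * (j:ℕ) + 4) * ρ := by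
      intro j
      obtain ⟨s, hs, h1, h2⟩ := hcon j (Nat.lt_succ_iff.1 j.2)
      refine ⟨⟨s, ?_⟩, h1, h2⟩
      rw [Multiset.mem_toFinset, Polynomial.mem_roots (ev3_monic hP _ _).ne_zero]
      exact hs
    choose f hf1 hf2 using this
    obtain ⟨i, j, hij, hfij⟩ := Fintype.exists_ne_map_eq_of_card_lt f (by
      rw [Fintype.card_coe, Fintype.card_fin]
      apply Nat.lt_succ_of_le
      apply (Multiset.toFinset_card_le _).trans
      apply (Polynomial.card_roots' _).trans
      rw [ev3_natDegree hP])
    have key : ∀ i j, f i = f j → (i : ℕ) ≤ j := by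
      intro i j hfij
      have h1 := (hf1 i).trans_lt (hfij ▸ hf2 j)
      have h2 := lt_of_mul_lt_mul_right h1 hρ.le
      have h3 : ((3 * (i:ℕ) + 1 : ℕ) : ℝ) < ((3 * (j : ℕ) + 4 : ℕ) : ℝ) := by push_cast; exact h2
      have := Nat.cast_lt.1 h3
      omega
    exact hij (Fin.ext (le_antisymm (key i j hfij) (key j i hfij.symm)))
  obtain ⟨j, hje, hj⟩ := hgap
  have hmain : ‖q.2 - p.2‖ < (3 * j + 2) * ρ := by
    induction hpq with
    | refl => rw [sub_self, norm_zero]; positivity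
    | @tail u v _ hs ih =>
      by_contra hcon
      push Not at hcon
      obtain ⟨s, hs0, hs1⟩ := hgood v hs.2.1
      have h1 : ‖v.2 - p.2‖ ≤ ‖u.2 - v.2‖ + ‖u.2 - p.2‖ := by
        rw [norm_sub_rev u.2 v.2]
        calc ‖v.2 - p.2‖ = ‖(v.2 - u.2) + (u.2 - p.2)‖ := by ring_nf
          _ ≤ _ := norm_add_le _ _
      have h2 := hs.2.2
      have h3 : ‖v.2 - p.2‖ ≤ ‖v.2 - s‖ + ‖s - p.2‖ := by
        calc ‖v.2 - p.2‖ = ‖(v.2 - s) + (s - p.2)‖ := by ring_nf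
          _ ≤ _ := norm_add_le _ _
      have h4 : ‖s - p.2‖ ≤ ‖v.2 - s‖ + ‖v.2 - p.2‖ := by
        rw [norm_sub_rev v.2 s]
        calc ‖s - p.2‖ = ‖(s - v.2) + (v.2 - p.2)‖ := by ring_nf
          _ ≤ _ := norm_add_le _ _
      exact hj s hs0 ⟨by nlinarith, by nlinarith⟩
  have : (j : ℝ) ≤ e := by exact_mod_cast hje
  rw [← hρe]
  apply hmain.le.trans
  gcongr

lemma chain_bound {n : ℕ} {Γ : Set (Eu n)} {a : Fin n → ℂ} (hG : Good Γ a) (B r : ℝ) {ε : ℝ}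
    (hε : 0 < ε) : ∃ η > 0, ∃ R₀ : ℝ, 1 ≤ R₀ ∧ ∀ R ≥ R₀, ∀ p : Eu n, ∀ x : ℂ, ‖x‖ ≤ B * R →
      ‖lf a p - x‖ ≤ η * R → ∀ q, Chain (Γ ∩ lf a ⁻¹' closedBall x (‖lf a p - x‖)) r p q →
      ‖q - p‖ ≤ ε * R := by
  choose P hP hP0 using hG
  have hε' : 0 < ε / (n + 1) := by positivity
  choose η hη hηP using fun j => chain_diam (hP j) B hε'
  obtain ⟨η₀, hη₀, hηj⟩ : ∃ η₀ : ℝ, 0 < η₀ ∧ ∀ j, η₀ < η j := by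
    have h1 : ∀ᶠ t in nhdsWithin (0:ℝ) (Ioi 0), ∀ j, t < η j := by
      rw [Filter.eventually_all]
      intro j
      filter_upwards [Ioo_mem_nhdsGT (hη j)] with t ht using ht.2
    obtain ⟨t, ht, ht2⟩ := (h1.and self_mem_nhdsWithin).exists
    exact ⟨t, ht2, ht⟩
  refine ⟨η₀, hη₀, max 1 (r / η₀), le_max_left _ _, fun R hR p x hx hpx q hq => ?_⟩
  have hR1 : 1 ≤ R := (le_max_left _ _).trans hR
  have hRr : r ≤ η₀ * R := by
    have := (le_max_right _ _).trans hR
    rw [div_le_iff₀ hη₀] at this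
    linarith
  have hR0 : 0 < R := by linarith
  let τ : ℂ := ((R : ℝ) : ℂ)⁻¹
  have hτ : ‖τ‖ = R⁻¹ := by
    simp only [τ, norm_inv, Complex.norm_real, Real.norm_eq_abs, abs_of_pos hR0]
  have key : ∀ j, ‖(q - p) j‖ ≤ ε / (n + 1) * R := by
    intro j
    have h1 := hηP j τ (τ * x) (by rw [hτ]; exact inv_le_one_of_one_le₀ hR1) (by
      rw [norm_mul, hτ, inv_mul_le_iff₀ hR0]; linarith) (τ * lf a p, τ * p j) (τ * lf a q, τ * q j)
      (by
        have hb : ∀ b ∈ (Γ ∩ lf a ⁻¹' closedBall x (‖lf a p - x‖)),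
          ‖τ * lf a b - τ * x‖ ≤ η j ∧ (ev3 (P j) τ (τ * lf a b)).eval (τ * b j) = 0 := by
          rintro b ⟨hb1, hb2⟩
          refine ⟨?_, hP0 j τ b hb1⟩
          rw [mem_preimage, mem_closedBall, dist_eq_norm] at hb2
          rw [← mul_sub, norm_mul, hτ, inv_mul_le_iff₀ hR0]
          apply hb2.trans (hpx.trans _)
          rw [mul_comm]
          exact mul_le_mul_of_nonneg_left (hηj j).le hR0.le
        refine Relation.ReflTransGen.lift (fun b : Eu n => (τ * lf a b, τ * b j)) ?_ _ _ hq
        rintro b c ⟨h1, h2, h3⟩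
        refine ⟨hb b h1, hb c h2, ?_⟩
        show ‖τ * b j - τ * c j‖ < η j
        rw [← mul_sub, norm_mul, hτ, inv_mul_lt_iff₀ hR0]
        have h4 : ‖b j - c j‖ ≤ dist b c := by
          rw [dist_eq_norm]; exact PiLp.norm_apply_le (b - c) j
        have := mul_lt_mul_of_pos_right (hηj j) hR0
        linarith)
    simp only at h1
    rw [← mul_sub, norm_mul, hτ, inv_mul_le_iff₀ hR0] at h1
    rw [PiLp.sub_apply]; linarith
  calc ‖q - p‖ ≤ ∑ j, ‖(q - p) j‖ := norm_le_sum _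
    _ ≤ ∑ j : Fin n, ε / (n + 1) * R := Finset.sum_le_sum fun j _ => key j
    _ = n / (n + 1) * (ε * R) := by simp; ring
    _ ≤ 1 * (ε * R) := by
      gcongr
      rw [div_le_one (by positivity)]; linarith
    _ = _ := one_mul _

lemma lemA {n : ℕ} {Γ : Set (Eu n)} {a : Fin n → ℂ} (h : IsIrreducibleAlgebraicCurve Γ)
    (hG : Good Γ a) {d : ℕ}
    (hd : ∀ x, ∃ s : Finset (Eu n), s.card ≤ d ∧ ∀ p ∈ Γ, lf a p = x → p ∈ s)
    (B : ℝ) {r ε : ℝ} (hr : 0 < r) (hε : 0 < ε) :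
    ∃ η > 0, ∃ R₀ : ℝ, 1 ≤ R₀ ∧ ∀ R ≥ R₀, ∀ f : Fin (d + 1) → Eu n, (∀ i, f i ∈ Γ) →
      (∀ i, ‖f i‖ ≤ B * R) → (∀ i j, dist (f i) (f j) ≤ η * R) →
      ∃ i j, i ≠ j ∧ Chain (Γ ∩ closedBall (f i) (ε * R)) r (f i) (f j) := by
  obtain ⟨N, hN1, hN⟩ := lf_bound a
  obtain ⟨η, hη, R₀, hR₀, hb⟩ := chain_bound hG (N * B) r (half_pos hε)
  refine ⟨min (η / N) (ε / 2), by positivity, R₀, hR₀, fun R hR f hf hfB hfd => ?_⟩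
  have hR0 : 0 < R := by linarith
  set x := lf a (f 0) with hx
  have hxB : ‖x‖ ≤ N * B * R := by
    apply (hN _).trans
    rw [mul_assoc]
    gcongr
    exact hfB 0
  have hfx : ∀ i, ‖lf a (f i) - x‖ ≤ η * R := by
    intro i
    rw [hx, ← lf_sub]
    apply (hN _).trans
    rw [← dist_eq_norm]
    have h1 := (hfd i 0).trans (mul_le_mul_of_nonneg_right (min_le_left _ _) hR0.le)
    calc N * dist (f i) (f 0) ≤ N * (η / N * R) := by gcongr
      _ = η * R := by field_simp
  choose q hqΓ hqx hq using fun i => chain_lift h hG (hf i) x hr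
  obtain ⟨s, hs, hs2⟩ := hd x
  obtain ⟨i, j, hij, hqij⟩ := Fintype.exists_ne_map_eq_of_card_lt
    (fun i => (⟨q i, hs2 _ (hqΓ i) (hqx i)⟩ : {p // p ∈ s})) (by
      rw [Fintype.card_coe, Fintype.card_fin]; omega)
  have hqij' : q i = q j := congrArg Subtype.val hqij
  have hc : ∀ i, Chain (Γ ∩ closedBall (f i) (ε / 2 * R)) r (f i) (q i) := by
    intro i
    have h1 := (hq i).restrict (W := closedBall (f i) (ε / 2 * R)) (by
      intro b hbc
      rw [mem_closedBall, dist_eq_norm]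
      exact hb R hR (f i) x hxB (hfx i) b hbc)
    exact h1.mono' (fun z hz => ⟨hz.1.1, hz.2⟩) le_rfl
  refine ⟨i, j, hij, ?_⟩
  have h1 := (hc i).mono' (W := Γ ∩ closedBall (f i) (ε * R)) (by
    apply inter_subset_inter_right
    apply closedBall_subset_closedBall
    nlinarith) le_rfl
  have h2 := (hc j).symm'.mono' (W := Γ ∩ closedBall (f i) (ε * R)) (by
    apply inter_subset_inter_right
    apply closedBall_subset_closedBall'
    have := (hfd j i).trans (mul_le_mul_of_nonneg_right (min_le_right _ _) hR0.le)
    linarith) le_rfl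
  rw [← hqij'] at h2
  exact Relation.ReflTransGen.trans h1 h2

/-- the shear -/
def sh {n : ℕ} (a : Fin n → ℂ) (v : Eu n) (m : ℕ) (c : ℂ) (p : Eu n) : Eu n :=
  p + (c * lf a p ^ m) • v

lemma lf_sh {n : ℕ} {a : Fin n → ℂ} {v : Eu n} (hv : lf a v = 0) (m : ℕ) (c : ℂ) (p : Eu n) :
    lf a (sh a v m c p) = lf a p := by
  rw [sh, lf_add, lf_smul, hv, mul_zero, add_zero]

lemma sh_sh {n : ℕ} {a : Fin n → ℂ} {v : Eu n} (hv : lf a v = 0) (m : ℕ) (c : ℂ) (p : Eu n) :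
    sh a v m (-c) (sh a v m c p) = p := by
  rw [sh, lf_sh hv, sh, add_assoc, ← add_smul]
  simp

lemma sh_cont {n : ℕ} (a : Fin n → ℂ) (v : Eu n) (m : ℕ) (c : ℂ) : Continuous (sh a v m c) := by
  unfold sh
  exact continuous_id.add ((continuous_const.mul ((lf_cont a).pow m)).smul continuous_const)

def shH {n : ℕ} {a : Fin n → ℂ} {v : Eu n} (hv : lf a v = 0) (m : ℕ) : Eu n ≃ₜ Eu n where
  toFun := sh a v m (-1)
  invFun := sh a v m 1
  left_inv := fun p => by simpa using sh_sh hv m (-1) p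
  right_inv := fun p => sh_sh hv m 1 p
  continuous_toFun := sh_cont _ _ _ _
  continuous_invFun := sh_cont _ _ _ _

lemma alg_sh {n : ℕ} {Γ : Set (Eu n)} (h : IsAlgebraicSet Γ) (a : Fin n → ℂ) (v : Eu n) (m : ℕ)
    (c : ℂ) : IsAlgebraicSet (sh a v m c ⁻¹' Γ) := by
  classical
  obtain ⟨S, rfl⟩ := h
  let β : MvPolynomial (Fin n) ℂ →ₐ[ℂ] MvPolynomial (Fin n) ℂ :=
    MvPolynomial.aeval (fun i => MvPolynomial.X i + MvPolynomial.C c * LP a ^ m * MvPolynomial.C (v i))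
  have hβ : ∀ x f, evp x (β f) = evp (sh a v m c x) f := by
    intro x f
    have : (evp x).comp β = evp (sh a v m c x) := by
      apply MvPolynomial.algHom_ext
      intro i
      rw [evp_X, AlgHom.comp_apply]
      simp only [β, MvPolynomial.aeval_X, map_add, map_mul, map_pow, evp_LP, evp_X]
      simp [evp, sh]
    exact DFunLike.congr_fun this f
  refine ⟨S.image β, ?_⟩
  ext x
  simp only [mem_preimage, mem_setOf_eq, Finset.mem_image, forall_exists_index, and_imp,
    forall_apply_eq_imp_iff₂, ← evp_eq, hβ]

lemma irr_sh {n : ℕ} {Γ : Set (Eu n)} (h : IsIrreducibleAlgebraicCurve Γ) {a : Fin n → ℂ}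
    {v : Eu n} (hv : lf a v = 0) (m : ℕ) :
    IsIrreducibleAlgebraicCurve (shH hv m ⁻¹' Γ) := by
  refine ⟨alg_sh h.1 _ _ _ _, ?_, ?_⟩
  · apply h.2.1.preimage
    intro x _
    exact (shH hv m).surjective x
  · intro Y hY hYs
    have h1 : IsAlgebraicSet ((shH hv m).symm ⁻¹' Y) := alg_sh hY _ _ _ _
    have h2 : (shH hv m).symm ⁻¹' Y ⊂ Γ := by
      refine ⟨fun x hx => ?_, fun hs => hYs.2 fun x hx => ?_⟩
      · have := hYs.1 hx
        simpa using this
      · have := hs hx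
        simpa using this
    have h3 := h.2.2 _ h1 h2
    have h4 : Y = (shH hv m).symm '' ((shH hv m).symm ⁻¹' Y) :=
      (image_preimage_eq _ (shH hv m).symm.surjective).symm
    rw [h4]
    exact h3.image _

lemma curve_of_irr {n : ℕ} {Γ : Set (Eu n)} (h : IsIrreducibleAlgebraicCurve Γ) :
    IsAlgebraicCurve Γ := by
  classical
  refine ⟨{Γ}, ?_, ?_⟩
  · intro C hC
    rw [Finset.mem_singleton] at hC
    rwa [hC]
  · simp

lemma exists_v {n : ℕ} (hn : 2 < n) (a : Fin n → ℂ) : ∃ v : Eu n, v ≠ 0 ∧ lf a v = 0 := by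
  have hs : ∀ (i : Fin n) (c : ℂ), lf a (EuclideanSpace.single i c) = a i * c := by
    intro i c
    simp [lf, Pi.single_apply]
  let i0 : Fin n := ⟨0, by omega⟩
  let i1 : Fin n := ⟨1, by omega⟩
  have h01 : i1 ≠ i0 := by simp [i0, i1]
  by_cases h0 : a i0 = 0
  · refine ⟨EuclideanSpace.single i0 1, ?_, by rw [hs, h0, zero_mul]⟩
    intro hc
    have := congrArg (fun p : Eu n => p i0) hc
    simp at this
  · refine ⟨EuclideanSpace.single i0 (a i1) - EuclideanSpace.single i1 (a i0), ?_, ?_⟩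
    · intro hc
      have := congrArg (fun p : Eu n => p i1) hc
      simp [h01] at this
      exact h0 this
    · rw [lf_sub, hs, hs]; ring

lemma root_sep (m : ℕ) (hm : 0 < m) : ∃ θ > 0, ∀ ω ω' : ℂ, ω ^ m = 1 → ω' ^ m = 1 →
    ‖ω - ω'‖ < 3 * θ → ω = ω' := by
  have h1 : ∀ᶠ t in nhdsWithin (0:ℝ) (Ioi 0), ∀ ω ∈ Polynomial.nthRootsFinset m (1:ℂ),
      ∀ ω' ∈ Polynomial.nthRootsFinset m (1:ℂ), ‖ω - ω'‖ < 3 * t → ω = ω' := by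
    rw [Filter.eventually_all_finset]
    intro ω _
    rw [Filter.eventually_all_finset]
    intro ω' _
    by_cases hω : ω = ω'
    · exact Filter.Eventually.of_forall fun _ _ => hω
    · have : 0 < ‖ω - ω'‖ / 3 := by
        have := norm_pos_iff.2 (sub_ne_zero.2 hω)
        positivity
      filter_upwards [Ioo_mem_nhdsGT this] with t ht hlt
      have := ht.2
      linarith
  obtain ⟨t, ht, ht2⟩ := (h1.and self_mem_nhdsWithin).exists
  exact ⟨t, ht2, fun ω ω' h h' => ht ω ((Polynomial.mem_nthRootsFinset hm _).2 h) ω'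
    ((Polynomial.mem_nthRootsFinset hm _).2 h')⟩

lemma near_unity {m : ℕ} (hm : 0 < m) {θ : ℝ} (hθ : 0 < θ) (w : ℂ) (h : ‖w ^ m - 1‖ < θ ^ m) :
    ∃ ω, ω ^ m = 1 ∧ ‖w - ω‖ < θ := by
  obtain ⟨s, hs, hs2⟩ := near_root (Q := Polynomial.X ^ m - Polynomial.C 1)
    (Polynomial.monic_X_pow_sub_C _ hm.ne') hθ w (by
      rw [Polynomial.natDegree_X_pow_sub_C]; simpa using h)
  refine ⟨s, ?_, hs2⟩
  simpa [sub_eq_zero] using hs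

lemma lemB {n : ℕ} {Γ : Set (Eu n)} {a : Fin n → ℂ}
    (hG : Good Γ a) {v : Eu n} (hv0 : v ≠ 0) (hv : lf a v = 0) {m : ℕ} (hm : 2 ≤ m) :
    ∃ ε > 0, ∀ r : ℝ, ∃ σ₀ : ℝ, 1 ≤ σ₀ ∧ ∀ σ ≥ σ₀, ∀ P P' ω ω', ω ^ m = 1 → ω' ^ m = 1 →
      P ∈ shH hv m ⁻¹' Γ → lf a P = (σ : ℂ) * ω → lf a P' = (σ : ℂ) * ω' →
      Chain (shH hv m ⁻¹' Γ ∩ closedBall P (ε * σ ^ m)) r P P' → ω = ω' := by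
  obtain ⟨N, hN1, hN⟩ := lf_bound a
  obtain ⟨C, hC1, hC⟩ := proper hG
  obtain ⟨θ, hθ, hsep⟩ := root_sep m (by omega)
  have hV : 0 < ‖v‖ := norm_pos_iff.2 hv0
  let ε : ℝ := θ ^ m * ‖v‖ / (2 * (2 + C * N))
  have hε : 0 < ε := by positivity
  have hεV : (2 + C * N) * ε < θ ^ m * ‖v‖ := by
    have : (2 + C * N) * ε = θ ^ m * ‖v‖ / 2 := by
      simp only [ε]; field_simp
    rw [this]
    have : 0 < θ ^ m * ‖v‖ := by positivity
    linarith
  refine ⟨ε, hε, fun r => ⟨max 1 (max (4 * C / ε) (N * r / θ)), le_max_left _ _, ?_⟩⟩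
  intro σ hσ P P' ω ω' hω hω' hP hPω hPω' hch
  have hσ1 : 1 ≤ σ := (le_max_left _ _).trans hσ
  have hσ2 : 4 * C ≤ ε * σ := by
    have := ((le_max_left _ _).trans (le_max_right _ _)).trans hσ
    rw [div_le_iff₀ hε] at this
    linarith
  have hσ3 : N * r ≤ θ * σ := by
    have := ((le_max_right _ _).trans (le_max_right _ _)).trans hσ
    rw [div_le_iff₀ hθ] at this
    linarith
  have hσ0 : 0 < σ := by linarith
  have hσc : (σ : ℂ) ≠ 0 := by exact_mod_cast hσ0.ne'
  have hσn : ‖(σ : ℂ)‖ = σ := by rw [Complex.norm_real, Real.norm_eq_abs, abs_of_pos hσ0]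
  have hσm : σ * σ ≤ σ ^ m := by
    rw [← pow_two]; exact pow_le_pow_right₀ hσ1 hm
  have hωn : ‖ω‖ = 1 := by
    have : ‖ω‖ ^ m = 1 := by rw [← norm_pow, hω, norm_one]
    exact (pow_eq_one_iff_of_nonneg (norm_nonneg _) (by omega)).1 this
  have hdec : ∀ b ∈ shH hv m ⁻¹' Γ, ∃ q : Eu n, b = q + (lf a b ^ m) • v ∧
      ‖q‖ ≤ C * (1 + ‖lf a b‖) := by
    intro b hb
    refine ⟨sh a v m (-1) b, ?_, ?_⟩
    · simp [sh]
    · have := hC _ hb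
      have h2 : lf a (shH hv m b) = lf a b := lf_sh hv m (-1) b
      rw [h2] at this
      exact this
  have hclose : ∀ b ∈ shH hv m ⁻¹' Γ ∩ closedBall P (ε * σ ^ m),
      ∃ ω₁ : ℂ, ω₁ ^ m = 1 ∧ ‖lf a b / σ - ω₁‖ < θ := by
    rintro b ⟨hbΛ, hbB⟩
    apply near_unity (by omega) hθ
    rw [mem_closedBall, dist_eq_norm] at hbB
    obtain ⟨q, hq, hqn⟩ := hdec b hbΛ
    obtain ⟨q', hq', hqn'⟩ := hdec P hP
    have hlP : ‖lf a P‖ = σ := by rw [hPω, norm_mul, hσn, hωn, mul_one]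
    have hlb : ‖lf a b‖ ≤ σ + N * (ε * σ ^ m) := by
      have h1 : lf a b = lf a P + lf a (b - P) := by rw [lf_sub]; ring
      rw [h1]
      apply (norm_add_le _ _).trans
      rw [hlP]
      gcongr
      exact (hN _).trans (by gcongr)
    have hPm : lf a P ^ m = (σ : ℂ) ^ m := by rw [hPω, mul_pow, hω, mul_one]
    have h1 : (lf a b ^ m - (σ : ℂ) ^ m) • v = (b - P) - q + q' := by
      rw [sub_smul]
      have e1 : lf a b ^ m • v = b - q := by
        nth_rewrite 2 [hq]; abel
      have e2 : (σ : ℂ) ^ m • v = P - q' := by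
        rw [← hPm]
        nth_rewrite 2 [hq']; abel
      rw [e1, e2]; abel
    have h2 : ‖lf a b ^ m - (σ : ℂ) ^ m‖ * ‖v‖ ≤ ε * σ ^ m + C * (1 + (σ + N * (ε * σ ^ m))) +
        C * (1 + σ) := by
      rw [← norm_smul, h1]
      apply (norm_add_le _ _).trans
      apply add_le_add
      · apply (norm_sub_le _ _).trans
        apply add_le_add hbB
        apply hqn.trans
        gcongr
      · rw [hlP] at hqn'
        exact hqn'
    have h3 : ‖lf a b ^ m - (σ : ℂ) ^ m‖ * ‖v‖ ≤ (2 + C * N) * ε * σ ^ m := by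
      have h4 : C * (1 + σ) ≤ C * (2 * σ) := by gcongr; linarith
      have h5 : 4 * C * σ ≤ ε * σ ^ m := by
        calc 4 * C * σ ≤ ε * σ * σ := by gcongr
          _ = ε * (σ * σ) := by ring
          _ ≤ _ := by gcongr
      nlinarith
    have h6 : (lf a b / σ) ^ m - 1 = (lf a b ^ m - (σ : ℂ) ^ m) / (σ : ℂ) ^ m := by
      rw [div_pow, sub_div, div_self (pow_ne_zero _ hσc)]
    rw [h6, norm_div, norm_pow, hσn, div_lt_iff₀ (by positivity)]
    have h7 : (2 + C * N) * ε * σ ^ m < θ ^ m * ‖v‖ * σ ^ m := by gcongr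
    have h8 := h3.trans_lt h7
    have h9 : ‖lf a b ^ m - (σ : ℂ) ^ m‖ * ‖v‖ < (θ ^ m * σ ^ m) * ‖v‖ := by linarith
    exact lt_of_mul_lt_mul_right h9 hV.le
  have hmain : ‖lf a P' / σ - ω‖ < θ := by
    clear hPω'
    unfold Chain at hch
    induction hch with
    | refl =>
      rw [hPω, mul_div_cancel_left₀ _ hσc, sub_self, norm_zero]; exact hθ
    | @tail b c _ hs ih =>
      obtain ⟨ω₁, h1, h2⟩ := hclose c hs.2.1
      have h3 : ‖lf a b / σ - lf a c / σ‖ < θ := by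
        rw [← sub_div, ← lf_sub, norm_div, hσn, div_lt_iff₀ hσ0]
        have := hs.2.2
        rw [dist_eq_norm] at this
        calc ‖lf a (b - c)‖ ≤ N * ‖b - c‖ := hN _
          _ < N * r := by gcongr
          _ ≤ _ := hσ3
      have h4 : ω = ω₁ := by
        apply hsep ω ω₁ hω h1
        have e : ω - ω₁ = -(lf a b / σ - ω) + (lf a b / σ - lf a c / σ) + (lf a c / σ - ω₁) := by ring
        rw [e]
        have := norm_add₃_le (a := -(lf a b / σ - ω)) (b := (lf a b / σ - lf a c / σ))
          (c := (lf a c / σ - ω₁))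
        rw [norm_neg] at this
        linarith
      rw [h4]; exact h2
  rw [hPω', mul_div_cancel_left₀ _ hσc] at hmain
  exact (hsep ω' ω hω' hω (by linarith)).symm

theorem main_thm (n : ℕ) (hn : 2 < n) (Γ : Set (EuclideanSpace ℂ (Fin n)))
    (hΓ : IsIrreducibleAlgebraicCurve Γ) :
    ∃ Λ : Set (EuclideanSpace ℂ (Fin n)),
      IsAlgebraicCurve Λ ∧
      (∃ Φ : EuclideanSpace ℂ (Fin n) ≃ₜ EuclideanSpace ℂ (Fin n), ⇑Φ '' Λ = Γ) ∧
      ¬ BiLipschitzEquiv Λ Γ := by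
  obtain ⟨a, hG⟩ := lin_norm hΓ
  replace hG : Good Γ a := hG
  obtain ⟨v, hv0, hv⟩ := exists_v hn a
  obtain ⟨d, hd⟩ := fiber_fin hG
  let m := d + 2
  have hm : 2 ≤ m := by omega
  refine ⟨shH hv m ⁻¹' Γ, curve_of_irr (irr_sh hΓ hv m), ⟨shH hv m,
    image_preimage_eq _ (shH hv m).surjective⟩, ?_⟩
  set Λ := shH hv m ⁻¹' Γ with hΛ
  rintro ⟨f, hbij, K, hK1, hK⟩
  have hK0 : 0 < K := by linarith
  obtain ⟨C, hC1, hC⟩ := proper hG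
  obtain ⟨ε, hε, hB⟩ := lemB hG hv0 hv hm
  obtain ⟨σ₀, hσ₀, hB⟩ := hB K
  obtain ⟨b, hb⟩ := (irr_sh hΓ hv m).2.1.nonempty
  obtain ⟨η, hη, R₀, hR₀, hA⟩ := lemA hΓ hG hd (‖f b‖ + K * ‖b‖ + K * (2 * C + ‖v‖)) (r := 1)
    (ε := ε / K) one_pos (by positivity)
  let σ : ℝ := max σ₀ (max R₀ (4 * C * K / η))
  have hσ1 : σ₀ ≤ σ := le_max_left _ _
  have hσ2 : R₀ ≤ σ := (le_max_left _ _).trans (le_max_right _ _)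
  have hσ3 : 4 * C * K ≤ η * σ := by
    have : 4 * C * K / η ≤ σ := (le_max_right _ _).trans (le_max_right _ _)
    rw [div_le_iff₀ hη] at this
    linarith
  have hσo : 1 ≤ σ := hσ₀.trans hσ1
  have hσ0 : 0 < σ := by linarith
  have hσn : ‖(σ : ℂ)‖ = σ := by rw [Complex.norm_real, Real.norm_eq_abs, abs_of_pos hσ0]
  have hσm : σ * σ ≤ σ ^ m := by
    rw [← pow_two]; exact pow_le_pow_right₀ hσo hm
  have hσσ : σ ≤ σ * σ := by nlinarith
  let ζ : ℂ := Complex.exp (2 * Real.pi * Complex.I / (m : ℕ))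
  have hζ : IsPrimitiveRoot ζ m := Complex.isPrimitiveRoot_exp m (by omega)
  have hζm : ∀ i : ℕ, (ζ ^ i) ^ m = 1 := by
    intro i
    rw [← pow_mul, mul_comm, pow_mul, hζ.pow_eq_one, one_pow]
  have hζn : ‖ζ‖ = 1 := hζ.norm'_eq_one (by omega)
  choose q hq hqx using fun i : Fin (d + 1) => surj hΓ hG ((σ : ℂ) * ζ ^ (i : ℕ))
  let p : Fin (d + 1) → Eu n := fun i => (shH hv m).symm (q i)
  have hpΛ : ∀ i, p i ∈ Λ := by
    intro i
    simp [hΛ, p, hq i]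
  have hpx : ∀ i, lf a (p i) = (σ : ℂ) * ζ ^ (i : ℕ) := fun i => (lf_sh hv m 1 (q i)).trans (hqx i)
  have hpq : ∀ i, p i = q i + ((σ : ℂ) ^ m) • v := by
    intro i
    show sh a v m 1 (q i) = _
    rw [sh, hqx, mul_pow, hζm, mul_one, one_mul]
  have hqn : ∀ i, ‖q i‖ ≤ 2 * C * σ := by
    intro i
    apply (hC _ (hq i)).trans
    rw [hqx, norm_mul, norm_pow, hζn, one_pow, hσn]
    nlinarith
  have hpn : ∀ i, ‖p i‖ ≤ (2 * C + ‖v‖) * σ ^ m := by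
    intro i
    rw [hpq]
    apply (norm_add_le _ _).trans
    rw [norm_smul, norm_pow, hσn]
    have := hqn i
    have h2 : 2 * C * σ ≤ 2 * C * σ ^ m := by gcongr; linarith
    linarith
  have hpd : ∀ i j, dist (p i) (p j) ≤ 4 * C * σ := by
    intro i j
    rw [dist_eq_norm, hpq, hpq, add_sub_add_right_eq_sub]
    apply (norm_sub_le _ _).trans
    have := hqn i
    have := hqn j
    linarith
  have hR1 : 1 ≤ σ ^ m := by linarith
  obtain ⟨i, j, hij, hch⟩ := hA (σ ^ m) (by linarith) (fun i => f (p i))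
    (fun i => hbij.mapsTo (hpΛ i)) (by
      intro i
      have h1 := (hK (p i) (hpΛ i) b hb).2
      have h2 : ‖f (p i)‖ ≤ ‖f (p i) - f b‖ + ‖f b‖ := by
        have := norm_add_le (f (p i) - f b) (f b)
        rwa [sub_add_cancel] at this
      have h3 : K * ‖p i - b‖ ≤ K * ((2 * C + ‖v‖) * σ ^ m + ‖b‖) := by
        gcongr
        exact (norm_sub_le _ _).trans (by linarith [hpn i])
      have h4 : ‖f b‖ + K * ‖b‖ ≤ (‖f b‖ + K * ‖b‖) * σ ^ m :=
        le_mul_of_one_le_right (by positivity) hR1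
      have h5 : (‖f b‖ + K * ‖b‖ + K * (2 * C + ‖v‖)) * σ ^ m =
        (‖f b‖ + K * ‖b‖) * σ ^ m + K * ((2 * C + ‖v‖) * σ ^ m) := by ring
      rw [h5]
      linarith) (by
      intro i j
      rw [dist_eq_norm]
      apply (hK _ (hpΛ i) _ (hpΛ j)).2.trans
      rw [← dist_eq_norm]
      calc K * dist (p i) (p j) ≤ K * (4 * C * σ) := by gcongr; exact hpd i j
        _ = 4 * C * K * σ := by ring
        _ ≤ η * σ * σ := by gcongr
        _ = η * (σ * σ) := by ring
        _ ≤ _ := by gcongr)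
  let g := Function.invFunOn f Λ
  have hgl : ∀ x ∈ Λ, g (f x) = x := fun x hx => hbij.injOn.leftInvOn_invFunOn hx
  have hgm : ∀ y ∈ Γ, g y ∈ Λ := fun y hy => Function.invFunOn_mem (hbij.surjOn hy)
  have hgr : ∀ y ∈ Γ, f (g y) = y := fun y hy => Function.invFunOn_eq (hbij.surjOn hy)
  have hgd : ∀ y ∈ Γ, ∀ y' ∈ Γ, dist (g y) (g y') ≤ K * dist y y' := by
    intro y hy y' hy'
    have := (hK _ (hgm y hy) _ (hgm y' hy')).1
    rw [hgr y hy, hgr y' hy', inv_mul_le_iff₀ hK0] at this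
    rwa [dist_eq_norm, dist_eq_norm]
  have hch2 : Chain (Λ ∩ closedBall (p i) (ε * σ ^ m)) K (p i) (p j) := by
    have h1 : ∀ y ∈ Γ ∩ closedBall (f (p i)) (ε / K * σ ^ m),
        g y ∈ Λ ∩ closedBall (p i) (ε * σ ^ m) := by
      rintro y ⟨hy, hy2⟩
      refine ⟨hgm y hy, ?_⟩
      rw [mem_closedBall] at hy2 ⊢
      have := hgd y hy (f (p i)) (hbij.mapsTo (hpΛ i))
      rw [hgl _ (hpΛ i)] at this
      apply this.trans
      calc K * dist y (f (p i)) ≤ K * (ε / K * σ ^ m) := by gcongr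
        _ = _ := by field_simp
    have h2 := Relation.ReflTransGen.lift (r := fun a b =>
        a ∈ Γ ∩ closedBall (f (p i)) (ε / K * σ ^ m) ∧
        b ∈ Γ ∩ closedBall (f (p i)) (ε / K * σ ^ m) ∧ dist a b < 1) (p := fun a b => a ∈ Λ ∩ closedBall (p i) (ε * σ ^ m) ∧
        b ∈ Λ ∩ closedBall (p i) (ε * σ ^ m) ∧ dist a b < K) g (by
      rintro y y' ⟨hy, hy', hd⟩
      refine ⟨h1 y hy, h1 y' hy', ?_⟩
      apply (hgd y hy.1 y' hy'.1).trans_lt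
      nlinarith) _ _ hch
    rw [Function.onFun, hgl _ (hpΛ i), hgl _ (hpΛ j)] at h2
    exact h2
  have := hB σ hσ1 (p i) (p j) _ _ (hζm i) (hζm j) (hpΛ i) (hpx i) (hpx j) hch2
  have := hζ.pow_inj (by have := i.2; omega) (by have := j.2; omega) this
  exact hij (Fin.ext this)

/-- for `n > 2` and an irreducible algebraic curve `Γ ⊂ ℂⁿ` with a singular
point, there is an algebraic curve `Λ ⊂ ℂⁿ` ambiently homeomorphic to `Γ` but not
bi-Lipschitz equivalent to `Γ`. -/
theorem stmt_7 (n : ℕ) (hn : 2 < n) (Γ : Set (EuclideanSpace ℂ (Fin n)))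
    (hΓ : IsIrreducibleAlgebraicCurve Γ) (hsing : (SingularSet Γ).Nonempty) :
    ∃ Λ : Set (EuclideanSpace ℂ (Fin n)),
      IsAlgebraicCurve Λ ∧
      (∃ Φ : EuclideanSpace ℂ (Fin n) ≃ₜ EuclideanSpace ℂ (Fin n), ⇑Φ '' Λ = Γ) ∧
      ¬ BiLipschitzEquiv Λ Γ := by
  exact main_thm n hn Γ hΓ

end
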